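/- arXiv:math/0610290 — 4 statements merged into one kernel-verified Lean document; each statement's English description precedes it below -/
import Mathlib

section
/- Let G be a finite group acting by automorphisms on a finitely generated abelian group M, and let H₁,…,H_r and H'₁,…,H'_s be subgroups of G such that the complex permutation representations ⊕ᵢ ℂ[G/Hᵢ] and ⊕ⱼ ℂ[G/H'ⱼ] are isomorphic as representations of G. Then Σᵢ rank(M^{Hᵢ}) = Σⱼ rank(M^{H'ⱼ}), where M^{H} is the subgroup of elements fixed by H and rank denotes the rank of a finitely generated abelian group (the ℤ-rank of the free part). -/
/-- The subgroup of elements of `M` fixed by every element of the subgroup `H`,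
viewed as a `ℤ`-submodule of the abelian group `M` on which `G` acts by automorphisms. -/
def fixedPoints' {G M : Type} [Group G] [AddCommGroup M] [DistribMulAction G M]
    (H : Subgroup G) : Submodule ℤ M where
  carrier := {m | ∀ h ∈ H, h • m = m}
  add_mem' := by
    intro a b ha hb h hh
    rw [smul_add, ha h hh, hb h hh]
  zero_mem' := by
    intro h hh
    rw [smul_zero]
  smul_mem' := by
    intro n m hm h hh
    have h2 := AddMonoidHom.map_zsmul (DistribSMul.toAddMonoidHom M h) n m
    simp only [DistribSMul.toAddMonoidHom_apply] at h2
    rw [h2, hm h hh]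

/-!
By Frobenius reciprocity, `G`-equivariant maps from `⊕ᵢ ℂ[G/Hᵢ]` to a representation `V` are
families of vectors `vᵢ ∈ V^{Hᵢ}`, so `Σᵢ dim V^{Hᵢ}` depends only on the isomorphism class of
`⊕ᵢ ℂ[G/Hᵢ]`. For `V = ℂ ⊗ M` this sum is `Σᵢ rank M^{Hᵢ}`: the elements fixed by `H` form the
common kernel of the maps `h - 1`, and since the endomorphisms of `M` form a Noetherian module,
finitely many of these maps have the same common kernel, whose rank is preserved by flat extension
of scalars.
-/

open Module Representation TensorProduct

section CommonKernel

section Span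

variable {R S L M N : Type*} [CommSemiring R] [CommSemiring S] [Algebra R S] [AddCommMonoid L]
  [Module R L] [AddCommMonoid M] [Module S M] [AddCommMonoid N] [Module R N] [Module S N]
  [IsScalarTower R S N]

theorem iInf_ker_span (φ : L →ₗ[R] M →ₗ[S] N) (s : Set L) :
    ⨅ f ∈ Submodule.span R s, LinearMap.ker (φ f) = ⨅ f ∈ s, LinearMap.ker (φ f) := by
  refine le_antisymm (biInf_mono fun f hf ↦ Submodule.subset_span hf) fun m hm ↦ ?_
  simp only [Submodule.mem_iInf, LinearMap.mem_ker] at hm ⊢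
  intro f hf
  induction hf using Submodule.span_induction with
  | mem f hf => exact hm f hf
  | zero => simp
  | add f f' _ _ hf hf' => simp [hf, hf']
  | smul r f _ hf => simp [hf]

theorem iInf_ker_eq_of_span_eq (φ : L →ₗ[R] M →ₗ[S] N) {s t : Set L}
    (h : Submodule.span R s = Submodule.span R t) :
    ⨅ f ∈ s, LinearMap.ker (φ f) = ⨅ f ∈ t, LinearMap.ker (φ f) := by
  rw [← iInf_ker_span φ s, h, iInf_ker_span]

end Span

variable {R M N : Type*} (S : Type*) [CommRing R] [CommRing S] [Algebra R S]
  [NoZeroDivisors S] [FaithfulSMul R S] [Module.Flat R S]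
  [AddCommGroup M] [Module R M] [AddCommGroup N] [Module R N]

theorem finrank_ker_baseChange (f : M →ₗ[R] N) :
    finrank S (LinearMap.ker (f.baseChange S)) = finrank R (LinearMap.ker f) :=
  (LinearMap.tensorKerEquiv S S f).finrank_eq.symm.trans
    (TensorProduct.isBaseChange R (LinearMap.ker f) S).finrank_eq

theorem finrank_iInf_ker_baseChange_of_finite {ι : Type*} [Finite ι] (f : ι → M →ₗ[R] N) :
    finrank S ↥(⨅ i, LinearMap.ker ((f i).baseChange S)) =
      finrank R ↥(⨅ i, LinearMap.ker (f i)) := by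
  classical
  have := Fintype.ofFinite ι
  have hpi : LinearMap.pi (fun i ↦ (f i).baseChange S) =
      (TensorProduct.piRight R S S fun _ : ι ↦ N).toLinearMap ∘ₗ
        (LinearMap.pi f).baseChange S := by
    ext m i
    simp
  rw [← LinearMap.ker_pi, ← LinearMap.ker_pi, hpi, LinearEquiv.ker_comp, finrank_ker_baseChange]

theorem finrank_iInf_ker_baseChange {s : Set (M →ₗ[R] N)} (hs : (Submodule.span R s).FG) :
    finrank S ↥(⨅ f ∈ s, LinearMap.ker (f.baseChange S)) =
      finrank R ↥(⨅ f ∈ s, LinearMap.ker f) := by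
  obtain ⟨t, -, hst⟩ := (Submodule.fg_span_iff_fg_span_finset_subset s).mp hs
  have hker : ⨅ f ∈ s, LinearMap.ker f = ⨅ f : t, LinearMap.ker f.1 := by
    rw [iInf_subtype]
    exact iInf_ker_eq_of_span_eq LinearMap.id hst
  have hker_baseChange : ⨅ f ∈ s, LinearMap.ker (f.baseChange S) =
      ⨅ f : t, LinearMap.ker (f.1.baseChange S) := by
    rw [iInf_subtype]
    exact iInf_ker_eq_of_span_eq (LinearMap.baseChangeHom R S M N) hst
  rw [hker, hker_baseChange, finrank_iInf_ker_baseChange_of_finite]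

end CommonKernel

section BaseChange

theorem flat_field_of_faithfulSMul (R K : Type*) [CommRing R] [Field K] [Algebra R K]
    [FaithfulSMul R K] : Module.Flat R K := by
  have := IsDomain.of_faithfulSMul R K
  let _ : Algebra (FractionRing R) K := FractionRing.liftAlgebra R K
  have : Module.Flat R (FractionRing R) := IsLocalization.flat _ (nonZeroDivisors R)
  exact Module.Flat.trans R (FractionRing R) K

variable {R G M : Type*} (S : Type*) [CommRing R] [CommRing S] [Algebra R S] [Group G]
  [AddCommGroup M] [Module R M]

/-- The representation on `S ⊗[R] M` obtained from a representation on an `R`-module `M` by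
extension of scalars to the `R`-algebra `S`. -/
noncomputable def baseChangeRep (ρ : Representation R G M) : Representation S G (S ⊗[R] M) :=
  (Module.End.baseChangeHom R S M : Module.End R M →* Module.End S (S ⊗[R] M)).comp ρ

theorem invariants_eq_iInf_ker (ρ : Representation R G M) :
    ρ.invariants = ⨅ f ∈ Set.range (fun g ↦ ρ g - 1), LinearMap.ker f := by
  ext m
  simp [sub_eq_zero]

theorem invariants_baseChangeRep_eq_iInf_ker (ρ : Representation R G M) :
    (baseChangeRep S ρ).invariants =
      ⨅ f ∈ Set.range (fun g ↦ ρ g - 1), LinearMap.ker (f.baseChange S) := by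
  rw [invariants_eq_iInf_ker, iInf_range, iInf_range]
  congr! with g
  rw [LinearMap.baseChange_sub, LinearMap.baseChange_one]
  rfl

theorem finrank_invariants_baseChangeRep [NoZeroDivisors S] [FaithfulSMul R S] [Module.Flat R S]
    [IsNoetherian R M] (ρ : Representation R G M) :
    finrank S (baseChangeRep S ρ).invariants = finrank R ρ.invariants := by
  rw [invariants_baseChangeRep_eq_iInf_ker, invariants_eq_iInf_ker]
  exact finrank_iInf_ker_baseChange S (IsNoetherian.noetherian _)

end BaseChange

section FrobeniusReciprocity

section EquivariantFunctions

variable {k G V : Type*} [CommSemiring k] [Monoid G] [AddCommMonoid V] [Module k V]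
  (X : Type*) [MulAction G X] (σ : Representation k G V)

/-- The `k`-module of functions from the `G`-set `X` to the representation `σ` that commute with the
action of `G`. This is `Hom_G(k[X], V)` expressed on the basis `X` of `k[X]`. -/
def equivariantFunctions : Submodule k (X → V) where
  carrier := {F | ∀ (g : G) (x : X), F (g • x) = σ g (F x)}
  add_mem' hF hF' g x := by simp [hF g x, hF' g x]
  zero_mem' g x := by simp
  smul_mem' c F hF g x := by simp [hF g x]

/-- The universal property of the permutation representation `k[X]`. -/
noncomputable def intertwiningMapEquivEquivariantFunctions :
    (ofMulAction k G X).IntertwiningMap σ ≃ₗ[k] equivariantFunctions X σ where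
  toFun f := ⟨fun x ↦ f (.single x 1), fun g x ↦ by
    rw [← f.isIntertwining, ofMulAction_single]⟩
  invFun F :=
    { toLinearMap := Finsupp.linearCombination k F.1 ∘ₗ
        (MonoidAlgebra.coeffLinearEquiv k).toLinearMap
      isIntertwining' g := by
        ext x
        simp [F.2 g x] }
  map_add' _ _ := rfl
  map_smul' _ _ := rfl
  left_inv f := by
    ext x
    simp
  right_inv F := by
    ext x
    simp

/-- The orbit decomposition of `equivariantFunctions`. -/
def equivariantFunctionsSigmaEquiv {ι : Type*} (X : ι → Type*) [∀ i, MulAction G (X i)] :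
    equivariantFunctions (Σ i, X i) σ ≃ₗ[k] Π i, equivariantFunctions (X i) σ where
  toFun F i := ⟨fun x ↦ F.1 ⟨i, x⟩, fun g x ↦ F.2 g ⟨i, x⟩⟩
  invFun F := ⟨fun x ↦ (F x.1).1 x.2, fun g x ↦ (F x.1).2 g x.2⟩
  map_add' _ _ := rfl
  map_smul' _ _ := rfl

end EquivariantFunctions

variable {k G V : Type*} [CommRing k] [Group G] [AddCommGroup V] [Module k V]
  (σ : Representation k G V)

/-- An equivariant function on the transitive `G`-set `G ⧸ H` is determined by its value at the
trivial coset, which can be any vector fixed by `H`. -/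
def equivariantFunctionsQuotientEquiv (H : Subgroup G) :
    equivariantFunctions (G ⧸ H) σ ≃ₗ[k] invariants (σ.comp H.subtype) where
  toFun F := ⟨F.1 (1 : G), fun h ↦ by
    have hfix : (h : G) • ((1 : G) : G ⧸ H) = (1 : G) := by
      rw [MulAction.Quotient.smul_coe, QuotientGroup.eq]
      simp
    exact (F.2 h (1 : G)).symm.trans (congrArg F.1 hfix)⟩
  invFun v := ⟨Quotient.lift (fun g ↦ σ g v) fun a b hab ↦ by
      have hv : σ (a⁻¹ * b) v = v := v.2 ⟨a⁻¹ * b, QuotientGroup.leftRel_apply.mp hab⟩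
      calc σ a v = σ a (σ (a⁻¹ * b) v) := by rw [hv]
        _ = σ b v := by rw [← Module.End.mul_apply, ← map_mul, mul_inv_cancel_left],
    fun g x ↦ by
      induction x using QuotientGroup.induction_on with
      | H a => exact LinearMap.congr_fun (map_mul σ g a) v⟩
  map_add' _ _ := rfl
  map_smul' _ _ := rfl
  left_inv F := by
    ext x
    induction x using QuotientGroup.induction_on with
    | H a => exact (F.2 a (1 : G)).symm.trans (congrArg (fun b : G ↦ F.1 b) (mul_one a))
  right_inv v := Subtype.ext (LinearMap.congr_fun (map_one σ) v)

/-- Frobenius reciprocity for a sum of permutation representations `k[G ⧸ H i]`. -/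
noncomputable def intertwiningMapSigmaQuotientEquiv {ι : Type*} (H : ι → Subgroup G) :
    (ofMulAction k G (Σ i, G ⧸ H i)).IntertwiningMap σ ≃ₗ[k]
      Π i, invariants (σ.comp (H i).subtype) :=
  intertwiningMapEquivEquivariantFunctions _ σ ≪≫ₗ
    equivariantFunctionsSigmaEquiv σ (fun i ↦ G ⧸ H i) ≪≫ₗ
    .piCongrRight fun i ↦ equivariantFunctionsQuotientEquiv σ (H i)

end FrobeniusReciprocity

theorem finrank_intertwiningMap_sigma_quotient {k G V ι : Type*} [Field k] [Group G]
    [AddCommGroup V] [Module k V] [FiniteDimensional k V] [Fintype ι] (σ : Representation k G V)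
    (H : ι → Subgroup G) :
    finrank k ((ofMulAction k G (Σ i, G ⧸ H i)).IntertwiningMap σ) =
      ∑ i, finrank k (invariants (σ.comp (H i).subtype)) := by
  rw [(intertwiningMapSigmaQuotientEquiv σ H).finrank_eq, finrank_pi_fintype]

/-- Precomposition with an isomorphism of representations, as an isomorphism of Hom-modules. -/
def intertwiningMapCongrLeft {k G U V W : Type*} [CommSemiring k] [Monoid G] [AddCommMonoid U]
    [Module k U] [AddCommMonoid V] [Module k V] [AddCommMonoid W] [Module k W]
    {ρ : Representation k G U} {τ : Representation k G W} (φ : ρ.Equiv τ)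
    (σ : Representation k G V) :
    ρ.IntertwiningMap σ ≃ₗ[k] τ.IntertwiningMap σ where
  toFun f := f.comp φ.symm.toIntertwiningMap
  invFun f := f.comp φ.toIntertwiningMap
  map_add' _ _ := rfl
  map_smul' _ _ := rfl
  left_inv f := DFunLike.ext _ _ fun v ↦ congrArg f (φ.symm_apply_apply v)
  right_inv f := DFunLike.ext _ _ fun v ↦ congrArg f (φ.apply_symm_apply v)

theorem finrank_fixedPoints' {G M : Type} [Group G] [AddCommGroup M] [DistribMulAction G M]
    (H : Subgroup G) :
    finrank ℤ (fixedPoints' (M := M) H) =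
      finrank ℤ (invariants ((ofDistribMulAction ℤ G M).comp H.subtype)) := by
  have hfix : fixedPoints' (M := M) H =
      invariants ((ofDistribMulAction ℤ G M).comp H.subtype) :=
    Submodule.ext fun _ ↦ ⟨fun hm h ↦ hm h h.2, fun hm h hh ↦ hm ⟨h, hh⟩⟩
  rw [hfix]

theorem sum_rank_fixed_eq_of_permRep_iso_general {R k G M ι κ : Type*} [CommRing R] [Field k]
    [Algebra R k] [FaithfulSMul R k] [Group G] [AddCommGroup M] [Module R M] [IsNoetherian R M]
    [Fintype ι] [Fintype κ] (H : ι → Subgroup G) (H' : κ → Subgroup G)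
    (φ : (ofMulAction k G (Σ i, G ⧸ H i)).Equiv (ofMulAction k G (Σ j, G ⧸ H' j)))
    (ρ : Representation R G M) :
    ∑ i, finrank R (invariants (ρ.comp (H i).subtype)) =
      ∑ j, finrank R (invariants (ρ.comp (H' j).subtype)) := by
  have := flat_field_of_faithfulSMul R k
  let σ := baseChangeRep k ρ
  have hrank (K : Subgroup G) : finrank R (invariants (ρ.comp K.subtype)) =
      finrank k (invariants (σ.comp K.subtype)) :=
    (finrank_invariants_baseChangeRep k (ρ.comp K.subtype)).symm
  simp only [hrank]
  rw [← finrank_intertwiningMap_sigma_quotient, ← finrank_intertwiningMap_sigma_quotient]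
  exact (intertwiningMapCongrLeft φ σ).finrank_eq

/-- The isomorphism of permutation representations given by a linear isomorphism of the spaces of
finitely supported functions that commutes with the action of `G`. -/
noncomputable def ofMulActionEquivOfFinsupp {k G X Y : Type*} [CommSemiring k] [Monoid G]
    [MulAction G X] [MulAction G Y] (e : (X →₀ k) ≃ₗ[k] (Y →₀ k))
    (he : ∀ (g : G) (v : X →₀ k), e (ofMulAction k G X g (.ofCoeff v)).coeff =
      (ofMulAction k G Y g (.ofCoeff (e v))).coeff) :
    (ofMulAction k G X).Equiv (ofMulAction k G Y) :=
  .mk (MonoidAlgebra.coeffLinearEquiv k ≪≫ₗ e ≪≫ₗ (MonoidAlgebra.coeffLinearEquiv k).symm)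
    fun g ↦ LinearMap.ext fun v ↦ congrArg MonoidAlgebra.ofCoeff (he g v.coeff)

/-- If `G` is a finite group acting by automorphisms on a finitely generated abelian group `M`
and the complex permutation representations `⊕ᵢ ℂ[G/Hᵢ]` and `⊕ⱼ ℂ[G/H'ⱼ]` are isomorphic,
then `Σᵢ rank M^{Hᵢ} = Σⱼ rank M^{H'ⱼ}`. -/
theorem sum_rank_fixed_eq_of_permRep_iso
    {G : Type} [Group G] [Fintype G]
    {r s : ℕ} (H : Fin r → Subgroup G) (H' : Fin s → Subgroup G)
    (e : ((Σ i : Fin r, G ⧸ H i) →₀ ℂ) ≃ₗ[ℂ] ((Σ j : Fin s, G ⧸ H' j) →₀ ℂ))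
    (he : ∀ (g : G) (v : (Σ i : Fin r, G ⧸ H i) →₀ ℂ),
      e (Representation.ofMulAction ℂ G (Σ i : Fin r, G ⧸ H i) g (MonoidAlgebra.ofCoeff v)).coeff =
        (Representation.ofMulAction ℂ G (Σ j : Fin s, G ⧸ H' j) g (MonoidAlgebra.ofCoeff (e v))).coeff)
    {M : Type} [AddCommGroup M] [Module.Finite ℤ M] [DistribMulAction G M] :
    ∑ i, Module.finrank ℤ (fixedPoints' (M := M) (H i)) =
      ∑ j, Module.finrank ℤ (fixedPoints' (M := M) (H' j)) := by
  simp only [finrank_fixedPoints']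
  exact sum_rank_fixed_eq_of_permRep_iso_general H H' (ofMulActionEquivOfFinsupp e he) _
end

section
/- Let G = S₃ be the symmetric group on {1,2,3}, C₂ = ⟨(1 2)⟩ and C₃ = ⟨(1 2 3)⟩. For every irreducible rational representation ρ of S₃ (trivial, sign, or the 2-dimensional one) and every G-invariant positive-definite symmetric ℚ-valued bilinear form B on ρ, the quantity det((1/6)B | ρ^{S₃})² · det(B | ρ) / ( det((1/2)B | ρ^{C₂})² · det((1/3)B | ρ^{C₃}) ), computed with respect to arbitrary ℚ-bases of the fixed subspaces, equals 3·q² for some nonzero rational number q. -/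
/-- The submodule of vectors fixed by every element of a subgroup `H` under a
representation `ρ`. -/
def fixedSubmodule {k G V : Type} [CommRing k] [Group G] [AddCommGroup V] [Module k V]
    (ρ : Representation k G V) (H : Subgroup G) : Submodule k V where
  carrier := {v | ∀ h ∈ H, ρ h v = v}
  add_mem' := by
    intro a b ha hb h hh
    rw [map_add, ha h hh, hb h hh]
  zero_mem' := by
    intro h hh
    rw [map_zero]
  smul_mem' := by
    intro c v hv h hh
    rw [map_smul, hv h hh]

/-!
Up to squares, the quotient is `det(B | ρ) / det((1/3)B | ρ^{C₃})`, because the other two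
determinants enter squared; they do not vanish, since averaging over `H` shows that `B` stays
nondegenerate on `ρ^H`. As `C₃` is normal and `ρ` is irreducible, `ρ^{C₃}` is everything or zero.
If it is everything, `ρ` is a line and the scaling by `1/3` contributes the factor `3`. If it is
zero, pick `v ≠ 0` fixed by the transposition and let `r` be the 3-cycle: then
`v + r v + r² v = 0`, so in the basis `v, r v` the form `B` is `B(v, v)` times the matrix with rows
`1, -1/2` and `-1/2, 1`, of determinant `3/4`.
-/

open Module

section GramDet

variable {R V ι κ : Type*} [CommRing R] [AddCommGroup V] [Module R V]
  [Fintype ι] [DecidableEq ι] [Fintype κ] [DecidableEq κ]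

/-- The determinant of the Gram matrix of a finite family `b` with respect to a bilinear form `B`;
for a basis `b` of a subspace `W` this is `det(B | W)`. -/
def gramDet (B : V →ₗ[R] V →ₗ[R] R) (b : ι → V) : R :=
  (Matrix.of fun i j => B (b i) (b j)).det

theorem gramDet_smul (c : R) (B : V →ₗ[R] V →ₗ[R] R) (b : ι → V) :
    gramDet (c • B) b = c ^ Fintype.card ι * gramDet B b :=
  Matrix.det_smul (Matrix.of fun i j => B (b i) (b j)) c

theorem gramDet_basis (B : V →ₗ[R] V →ₗ[R] R) (b : Basis ι R V) :
    gramDet B b = (LinearMap.toMatrix₂ b b B).det := by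
  congr 1
  ext
  simp

theorem gramDet_basis_ne_zero [IsDomain R] {B : V →ₗ[R] V →ₗ[R] R} (hB : B.SeparatingLeft)
    (b : Basis ι R V) : gramDet B b ≠ 0 :=
  gramDet_basis B b ▸ (LinearMap.separatingLeft_iff_det_ne_zero b).1 hB

theorem exists_gramDet_eq_unit_sq_mul_gramDet [Nontrivial R] (B : V →ₗ[R] V →ₗ[R] R)
    (b : Basis ι R V) (c : Basis κ R V) :
    ∃ u : Rˣ, gramDet B b = (u : R) ^ 2 * gramDet B c := by
  obtain ⟨e⟩ : Nonempty (κ ≃ ι) := ⟨c.indexEquiv b⟩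
  let c' := c.reindex e
  have hc : gramDet B c = gramDet B c' := by
    simp only [gramDet, c', Basis.reindex_apply]
    exact (Matrix.det_submatrix_equiv_self e.symm (Matrix.of fun i j => B (c i) (c j))).symm
  refine ⟨(c'.isUnit_det b).unit, ?_⟩
  rw [IsUnit.unit_spec, Basis.det_apply, hc, gramDet_basis, gramDet_basis,
    ← LinearMap.toMatrix₂_mul_basis_toMatrix c' c' b b B, Matrix.det_mul, Matrix.det_mul,
    Matrix.det_transpose]
  ring

end GramDet

theorem apply_mem_of_closure_eq_top {R G V : Type*} [CommSemiring R] [Monoid G]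
    [AddCommMonoid V] [Module R V] (ρ : Representation R G V) {S : Set G}
    (hS : Submonoid.closure S = ⊤) {U : Submodule R V} (hU : ∀ g ∈ S, ∀ v ∈ U, ρ g v ∈ U)
    (g : G) : ∀ v ∈ U, ρ g v ∈ U := by
  induction hS ▸ Submonoid.mem_top g using Submonoid.closure_induction with
  | mem g hg => exact hU g hg
  | one => simp
  | mul g h _ _ hg hh => exact fun v hv => by simpa using hg _ (hh v hv)

section Irreducible

variable {K G V : Type*} [Field K] [AddCommGroup V] [Module K V]

theorem isIrreducible_iff_forall_submodule [Monoid G] {ρ : Representation K G V} :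
    ρ.IsIrreducible ↔ Nontrivial V ∧
      ∀ U : Submodule K V, (∀ g, ∀ v ∈ U, ρ g v ∈ U) → U = ⊥ ∨ U = ⊤ := by
  constructor
  · intro h
    refine ⟨?_, fun U hU => ?_⟩
    · by_contra hV
      rw [not_nontrivial_iff_subsingleton] at hV
      exact bot_ne_top (α := Subrepresentation ρ)
        (Subrepresentation.toSubmodule_injective (Subsingleton.elim _ _))
    · exact (eq_bot_or_eq_top (⟨U, hU⟩ : Subrepresentation ρ)).imp
        (congrArg Subrepresentation.toSubmodule) (congrArg Subrepresentation.toSubmodule)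
  · rintro ⟨hV, h⟩
    refine { exists_pair_ne := ⟨⊥, ⊤, fun e => ?_⟩, eq_bot_or_eq_top := fun U => ?_ }
    · exact bot_ne_top (α := Submodule K V) (congrArg Subrepresentation.toSubmodule e)
    · exact (h U.toSubmodule U.apply_mem_toSubmodule).imp
        (Subrepresentation.toSubmodule_injective ·) (Subrepresentation.toSubmodule_injective ·)

theorem separatingLeft_of_isIrreducible [Group G] {ρ : Representation K G V}
    (hρ : ρ.IsIrreducible) {B : V →ₗ[K] V →ₗ[K] K} (hB : B ≠ 0)
    (hBinv : ∀ g v w, B (ρ g v) (ρ g w) = B v w) : B.SeparatingLeft := by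
  have hker : ∀ g, ∀ v ∈ LinearMap.ker B, ρ g v ∈ LinearMap.ker B := by
    intro g v hv
    rw [LinearMap.mem_ker] at hv ⊢
    ext w
    simpa [hv] using hBinv g v (ρ g⁻¹ w)
  rw [LinearMap.separatingLeft_iff_ker_eq_bot]
  refine ((isIrreducible_iff_forall_submodule.1 hρ).2 _ hker).resolve_right fun h => hB ?_
  exact LinearMap.ker_eq_top.1 h

end Irreducible

section FixedSubmodule

variable {R G V : Type} [CommRing R] [Group G] [AddCommGroup V] [Module R V]

theorem mem_fixedSubmodule_zpowers (ρ : Representation R G V) {g : G} {v : V} :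
    v ∈ fixedSubmodule ρ (Subgroup.zpowers g) ↔ ρ g v = v := by
  refine ⟨fun hv => hv g (Subgroup.mem_zpowers g), fun hv h hh => ?_⟩
  have hle : Subgroup.zpowers g ≤
      (MulAction.stabilizer (Module.End R V)ˣ v).comap ρ.asGroupHom := Subgroup.zpowers_le.2 hv
  exact hle hh

theorem apply_mem_fixedSubmodule (ρ : Representation R G V) (N : Subgroup G) [N.Normal]
    (g : G) (v : V) (hv : v ∈ fixedSubmodule ρ N) : ρ g v ∈ fixedSubmodule ρ N := by
  intro n hn
  have h := hv (g⁻¹ * n * g) (by simpa using ‹N.Normal›.conj_mem n hn g⁻¹)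
  simpa using congrArg (ρ g) h

variable [IsDomain R] {ρ : Representation R G V} {B : V →ₗ[R] V →ₗ[R] R}

theorem separatingLeft_domRestrict_fixedSubmodule (hB : B.SeparatingLeft)
    (hBinv : ∀ g v w, B (ρ g v) (ρ g w) = B v w) (H : Subgroup G)
    (hH : (Nat.card H : R) ≠ 0) :
    (B.domRestrict₁₂ (fixedSubmodule ρ H) (fixedSubmodule ρ H)).SeparatingLeft := by
  have : Finite H := Nat.finite_of_card_ne_zero (ne_zero_of_map (f := Nat.castRingHom R) hH)
  have := Fintype.ofFinite H
  rintro ⟨v, hv⟩ hvB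
  refine Subtype.ext (hB v fun w => ?_)
  have horbit : ∑ h : H, ρ h w ∈ fixedSubmodule ρ H := by
    intro g hg
    rw [map_sum]
    exact Fintype.sum_equiv (Equiv.mulLeft (⟨g, hg⟩ : H)) _ _ fun h => by simp
  have hterm (h : H) : B v (ρ h w) = B v w := by
    simpa only [hv h h.2] using hBinv h v w
  have hsum : (Nat.card H : R) * B v w = 0 := by
    have h : B v (∑ h : H, ρ h w) = 0 := hvB ⟨_, horbit⟩
    simpa [hterm] using h
  exact (mul_eq_zero.1 hsum).resolve_left hH

theorem gramDet_smul_fixedSubmodule_ne_zero (hG : (Nat.card G : R) ≠ 0)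
    (hB : B.SeparatingLeft) (hBinv : ∀ g v w, B (ρ g v) (ρ g w) = B v w) {c : R} (hc : c ≠ 0)
    {H : Subgroup G} {ι : Type*} [Fintype ι] [DecidableEq ι] (b : Basis ι R (fixedSubmodule ρ H)) :
    gramDet (c • B) (fun i => (b i : V)) ≠ 0 := by
  have hH : (Nat.card H : R) ≠ 0 :=
    ne_zero_of_dvd_ne_zero hG (Nat.cast_dvd_cast H.card_subgroup_dvd_card)
  rw [gramDet_smul]
  exact mul_ne_zero (pow_ne_zero _ hc)
    (gramDet_basis_ne_zero (separatingLeft_domRestrict_fixedSubmodule hB hBinv H hH) b)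

end FixedSubmodule

theorem fixedSubmodule_eq_bot_or_eq_top {K G V : Type} [Field K] [Group G] [AddCommGroup V]
    [Module K V] {ρ : Representation K G V} (hρ : ρ.IsIrreducible) (N : Subgroup G) [N.Normal] :
    fixedSubmodule ρ N = ⊥ ∨ fixedSubmodule ρ N = ⊤ :=
  (isIrreducible_iff_forall_submodule.1 hρ).2 _ (apply_mem_fixedSubmodule ρ N)

section SymmetricGroupThree

local notation "S₃" => Equiv.Perm (Fin 3)
local notation "r" => finRotate 3
local notation "s" => Equiv.swap (0 : Fin 3) 1

theorem submonoid_closure_rotation_swap : Submonoid.closure ({r, s} : Set S₃) = ⊤ := by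
  rw [← Subgroup.closure_toSubmonoid_of_finite]
  exact congrArg Subgroup.toSubmonoid
    (Equiv.Perm.closure_cycle_adjacent_swap isCycle_finRotate support_finRotate 0)

theorem normal_zpowers_rotation : (Subgroup.zpowers r).Normal := by
  have hcard : Nat.card (Subgroup.zpowers r) = 3 := by
    rw [Nat.card_zpowers]
    exact orderOf_eq_prime (by decide) (by decide)
  have hindex := (Subgroup.zpowers r).index_mul_card
  rw [hcard, Nat.card_perm, Nat.card_fin] at hindex
  exact Subgroup.normal_of_index_eq_two (Nat.eq_of_mul_eq_mul_right three_pos hindex)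

section Relations

variable {R V : Type*} [CommRing R] [AddCommGroup V] [Module R V] (ρ : Representation R S₃ V)

theorem apply_rotation_thrice (v : V) : ρ r (ρ r (ρ r v)) = v := by
  simp only [← Module.End.mul_apply, ← map_mul]
  rw [show r * (r * r) = 1 by decide, map_one, Module.End.one_apply]

theorem apply_swap_twice (v : V) : ρ s (ρ s v) = v := by
  rw [← Module.End.mul_apply, ← map_mul, Equiv.swap_mul_self, map_one, Module.End.one_apply]

theorem apply_swap_apply_rotation (v : V) : ρ s (ρ r v) = ρ r (ρ r (ρ s v)) := by
  simp only [← Module.End.mul_apply, ← map_mul]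
  rw [show s * r = r * (r * s) by decide]

theorem exists_apply_swap_eq_or_eq_neg [Nontrivial V] :
    ∃ v : V, v ≠ 0 ∧ (ρ s v = v ∨ ρ s v = -v) := by
  obtain ⟨w, hw⟩ := exists_ne (0 : V)
  by_cases h : w + ρ s w = 0
  · exact ⟨w, hw, .inr (neg_eq_of_add_eq_zero_right h).symm⟩
  · exact ⟨w + ρ s w, h, .inl (by rw [map_add, apply_swap_twice, add_comm])⟩

variable {ρ}

theorem add_apply_rotation_add_apply_rotation_twice (hfix : ∀ v, ρ r v = v → v = 0) (v : V) :
    v + ρ r v + ρ r (ρ r v) = 0 := by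
  apply hfix
  rw [map_add, map_add, apply_rotation_thrice]
  abel

theorem apply_rotation_twice_ne_apply_rotation (hfix : ∀ v, ρ r v = v → v = 0) {v : V}
    (hv : v ≠ 0) : ρ r (ρ r v) ≠ ρ r v := by
  intro h
  refine hv (hfix v ?_)
  simpa only [apply_rotation_thrice] using congrArg (fun w => ρ r (ρ r w)) h

theorem exists_apply_swap_eq [Nontrivial V] (hfix : ∀ v, ρ r v = v → v = 0) :
    ∃ v : V, v ≠ 0 ∧ ρ s v = v := by
  obtain ⟨v, hv, hsv | hsv⟩ := exists_apply_swap_eq_or_eq_neg ρ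
  · exact ⟨v, hv, hsv⟩
  · refine ⟨ρ r (ρ r v) - ρ r v,
      sub_ne_zero.2 (apply_rotation_twice_ne_apply_rotation hfix hv), ?_⟩
    simp only [map_sub, apply_swap_apply_rotation, hsv, map_neg, apply_rotation_thrice]
    abel

theorem four_mul_gramDet_pair_rotation (hfix : ∀ v, ρ r v = v → v = 0) {v : V} (hsv : ρ s v = v)
    {B : V →ₗ[R] V →ₗ[R] R} (hBinv : ∀ g v w, B (ρ g v) (ρ g w) = B v w) :
    4 * gramDet B ![v, ρ r v] = 3 * B v v ^ 2 := by
  have hswap : B v (ρ r (ρ r v)) = B v (ρ r v) := by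
    simpa [apply_swap_apply_rotation, hsv] using hBinv s v (ρ r v)
  have hsymm : B (ρ r v) v = B v (ρ r (ρ r v)) := by
    simpa [apply_rotation_thrice] using hBinv r v (ρ r (ρ r v))
  have hsum : B v v + B v (ρ r v) + B v (ρ r (ρ r v)) = 0 := by
    simpa using congrArg (B v) (add_apply_rotation_add_apply_rotation_twice hfix v)
  have hhalf : 2 * B v (ρ r v) = -B v v := by linear_combination hsum - hswap
  have hdet : gramDet B ![v, ρ r v] = B v v ^ 2 - B v (ρ r v) ^ 2 := by
    simp only [gramDet, Matrix.det_fin_two, Matrix.of_apply, Matrix.cons_val_zero,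
      Matrix.cons_val_one, hBinv, hsymm, hswap]
    ring
  linear_combination 4 * hdet - (2 * B v (ρ r v) - B v v) * hhalf

end Relations

variable {K V : Type*} [Field K] [AddCommGroup V] [Module K V] {ρ : Representation K S₃ V}

theorem eq_top_of_rotation_swap_stable (hρ : ρ.IsIrreducible) {U : Submodule K V} (hU : U ≠ ⊥)
    (hr : ∀ v ∈ U, ρ r v ∈ U) (hs : ∀ v ∈ U, ρ s v ∈ U) : U = ⊤ :=
  ((isIrreducible_iff_forall_submodule.1 hρ).2 U <|
    apply_mem_of_closure_eq_top ρ submonoid_closure_rotation_swap <| by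
      rintro g (rfl | rfl)
      exacts [hr, hs]).resolve_left hU

theorem finrank_eq_one_of_apply_rotation_eq (hρ : ρ.IsIrreducible) (hfix : ∀ v, ρ r v = v) :
    finrank K V = 1 := by
  have := (isIrreducible_iff_forall_submodule.1 hρ).1
  obtain ⟨v, hv, hsv⟩ := exists_apply_swap_eq_or_eq_neg ρ
  have hline : K ∙ v = ⊤ := by
    refine eq_top_of_rotation_swap_stable hρ (by simpa using hv)
      (fun w hw => (hfix w).symm ▸ hw) fun w hw => ?_
    obtain ⟨a, rfl⟩ := Submodule.mem_span_singleton.1 hw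
    rcases hsv with hsv | hsv
    · rwa [map_smul, hsv]
    · rwa [map_smul, hsv, smul_neg, neg_mem_iff]
  exact (finrank_eq_one_iff_of_nonzero v hv).2 hline

theorem linearIndependent_pair_rotation (hfix : ∀ v, ρ r v = v → v = 0) {v : V} (hv : v ≠ 0)
    (hsv : ρ s v = v) : LinearIndependent K ![v, ρ r v] := by
  rw [LinearIndependent.pair_iff]
  intro x y hxy
  have hswap : x • v + y • ρ r (ρ r v) = 0 := by
    simpa [apply_swap_apply_rotation, hsv] using congrArg (ρ s) hxy
  have hy : y = 0 := by
    have hdiff : y • (ρ r (ρ r v) - ρ r v) = 0 := by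
      linear_combination (norm := module) hswap - hxy
    exact (smul_eq_zero.1 hdiff).resolve_right
      (sub_ne_zero.2 (apply_rotation_twice_ne_apply_rotation hfix hv))
  have hx : x • v = 0 := by simpa [hy] using hxy
  exact ⟨(smul_eq_zero.1 hx).resolve_right hv, hy⟩

theorem span_pair_rotation_eq_top (hρ : ρ.IsIrreducible) (hfix : ∀ v, ρ r v = v → v = 0) {v : V}
    (hv : v ≠ 0) (hsv : ρ s v = v) : Submodule.span K {v, ρ r v} = ⊤ := by
  have hr2 : ρ r (ρ r v) = -v - ρ r v := by
    linear_combination (norm := module) add_apply_rotation_add_apply_rotation_twice hfix v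
  refine eq_top_of_rotation_swap_stable hρ (fun h => hv ?_) ?_ ?_
  · exact (Submodule.mem_bot K).1 (h ▸ Submodule.subset_span (by simp))
  all_goals
    intro w hw
    obtain ⟨x, y, rfl⟩ := Submodule.mem_span_pair.1 hw
    rw [Submodule.mem_span_pair]
  · refine ⟨-y, x - y, ?_⟩
    rw [map_add, map_smul, map_smul, hr2]
    module
  · refine ⟨x - y, -y, ?_⟩
    rw [map_add, map_smul, map_smul, apply_swap_apply_rotation, hsv, hr2]
    module

theorem exists_gramDet_eq_three_mul_sq_of_rotation_fixed_eq_zero {ι : Type*} [Fintype ι]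
    [DecidableEq ι] (hρ : ρ.IsIrreducible) (h2 : (2 : K) ≠ 0) {B : V →ₗ[K] V →ₗ[K] K}
    (hB : B.SeparatingLeft) (hBinv : ∀ g v w, B (ρ g v) (ρ g w) = B v w)
    (hfix : ∀ v, ρ r v = v → v = 0) (b : Basis ι K V) :
    ∃ q : K, q ≠ 0 ∧ gramDet B b = 3 * q ^ 2 := by
  have := (isIrreducible_iff_forall_submodule.1 hρ).1
  obtain ⟨v, hv, hsv⟩ := exists_apply_swap_eq hfix
  let c : Basis (Fin 2) K V := Basis.mk (linearIndependent_pair_rotation hfix hv hsv)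
    (by simpa [Set.pair_comm] using (span_pair_rotation_eq_top hρ hfix hv hsv).ge)
  have hc : 4 * gramDet B c = 3 * B v v ^ 2 := by
    simpa [c] using four_mul_gramDet_pair_rotation hfix hsv hBinv
  have h4 : (4 : K) ≠ 0 := by
    simpa [show (4 : K) = 2 ^ 2 by norm_num] using h2
  have hvv : B v v ≠ 0 := fun h0 =>
    mul_ne_zero h4 (gramDet_basis_ne_zero hB c) (by rw [hc, h0]; ring)
  obtain ⟨p, hbc⟩ := exists_gramDet_eq_unit_sq_mul_gramDet B b c
  refine ⟨p * B v v / 2, div_ne_zero (mul_ne_zero p.ne_zero hvv) h2, ?_⟩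
  refine mul_left_cancel₀ h4 ?_
  calc 4 * gramDet B b = p ^ 2 * (4 * gramDet B c) := by rw [hbc]; ring
    _ = 4 * (3 * (p * B v v / 2) ^ 2) := by
      rw [hc]
      field_simp
      ring

theorem exists_gramDet_eq_three_mul_sq_mul_of_rotation_eq {ι κ : Type*} [Fintype ι] [DecidableEq ι]
    [Fintype κ] [DecidableEq κ] (hρ : ρ.IsIrreducible) (h3 : (3 : K) ≠ 0)
    (hfix : ∀ v, ρ r v = v) (B : V →ₗ[K] V →ₗ[K] K) (b : Basis ι K V) (c : Basis κ K V) :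
    ∃ q : K, q ≠ 0 ∧ gramDet B b = 3 * q ^ 2 * gramDet ((3 : K)⁻¹ • B) c := by
  have hκ : Fintype.card κ = 1 :=
    (finrank_eq_card_basis c).symm.trans (finrank_eq_one_of_apply_rotation_eq hρ hfix)
  obtain ⟨q, hbc⟩ := exists_gramDet_eq_unit_sq_mul_gramDet B b c
  refine ⟨q, q.ne_zero, ?_⟩
  rw [hbc, gramDet_smul, hκ]
  field_simp

end SymmetricGroupThree

theorem exists_gramDet_div_gramDet_fixedSubmodule_eq {K V : Type} [Field K] [AddCommGroup V]
    [Module K V] {ρ : Representation K (Equiv.Perm (Fin 3)) V} (hρ : ρ.IsIrreducible)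
    (h2 : (2 : K) ≠ 0) (h3 : (3 : K) ≠ 0) {B : V →ₗ[K] V →ₗ[K] K} (hB : B.SeparatingLeft)
    (hBinv : ∀ g v w, B (ρ g v) (ρ g w) = B v w)
    {ι κ : Type*} [Fintype ι] [DecidableEq ι] [Fintype κ] [DecidableEq κ] (b : Basis ι K V)
    (c : Basis κ K (fixedSubmodule ρ (Subgroup.zpowers (finRotate 3)))) :
    ∃ q : K, q ≠ 0 ∧
      gramDet B b / gramDet ((3 : K)⁻¹ • B) (fun i => (c i : V)) = 3 * q ^ 2 := by
  have := normal_zpowers_rotation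
  rcases fixedSubmodule_eq_bot_or_eq_top hρ (Subgroup.zpowers (finRotate 3)) with hbot | htop
  · have hfix (v : V) (hv : ρ (finRotate 3) v = v) : v = 0 := by
      rwa [← mem_fixedSubmodule_zpowers, hbot, Submodule.mem_bot] at hv
    have hκ : IsEmpty κ := by
      rw [← Fintype.card_eq_zero_iff, ← finrank_eq_card_basis c, hbot, finrank_bot]
    obtain ⟨q, hq, hb⟩ :=
      exists_gramDet_eq_three_mul_sq_of_rotation_fixed_eq_zero hρ h2 hB hBinv hfix b
    exact ⟨q, hq, by rw [hb, gramDet, Matrix.det_isEmpty, div_one]⟩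
  · have hfix (v : V) : ρ (finRotate 3) v = v :=
      (mem_fixedSubmodule_zpowers ρ).1 (htop ▸ Submodule.mem_top)
    let c' : Basis κ K V := c.map (LinearEquiv.ofTop _ htop)
    have hc' : gramDet ((3 : K)⁻¹ • B) c' ≠ 0 := by
      rw [gramDet_smul]
      exact mul_ne_zero (pow_ne_zero _ (inv_ne_zero h3)) (gramDet_basis_ne_zero hB c')
    obtain ⟨q, hq, hb⟩ := exists_gramDet_eq_three_mul_sq_mul_of_rotation_eq hρ h3 hfix B b c'
    exact ⟨q, hq, (div_eq_iff hc').2 hb⟩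

theorem regulator_constant_S3_general {K V : Type} [Field K] (h6 : (6 : K) ≠ 0) [AddCommGroup V]
    [Module K V] {ρ : Representation K (Equiv.Perm (Fin 3)) V} (hρ : ρ.IsIrreducible)
    {B : V →ₗ[K] V →ₗ[K] K} (hB : B ≠ 0) (hBinv : ∀ g v w, B (ρ g v) (ρ g w) = B v w)
    {ιG ιV ι2 ι3 : Type*} [Fintype ιG] [DecidableEq ιG] [Fintype ιV] [DecidableEq ιV]
    [Fintype ι2] [DecidableEq ι2] [Fintype ι3] [DecidableEq ι3]
    (bG : Basis ιG K (fixedSubmodule ρ ⊤)) (bV : Basis ιV K V)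
    (b2 : Basis ι2 K (fixedSubmodule ρ (Subgroup.zpowers (Equiv.swap 0 1))))
    (b3 : Basis ι3 K (fixedSubmodule ρ (Subgroup.zpowers (finRotate 3)))) :
    ∃ q : K, q ≠ 0 ∧
      gramDet ((6 : K)⁻¹ • B) (fun i => (bG i : V)) ^ 2 * gramDet B bV /
        (gramDet ((2 : K)⁻¹ • B) (fun i => (b2 i : V)) ^ 2 *
          gramDet ((3 : K)⁻¹ • B) (fun i => (b3 i : V))) = 3 * q ^ 2 := by
  have h23 : (2 : K) * 3 ≠ 0 := by norm_num [h6]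
  have hcard : (Nat.card (Equiv.Perm (Fin 3)) : K) ≠ 0 := by
    rw [Nat.card_perm, Nat.card_fin]
    exact_mod_cast h6
  have hsep := separatingLeft_of_isIrreducible hρ hB hBinv
  have hG := gramDet_smul_fixedSubmodule_ne_zero hcard hsep hBinv (inv_ne_zero h6) bG
  have h2 := gramDet_smul_fixedSubmodule_ne_zero hcard hsep hBinv
    (inv_ne_zero (left_ne_zero_of_mul h23)) b2
  obtain ⟨q, hq, hV⟩ := exists_gramDet_div_gramDet_fixedSubmodule_eq hρ
    (left_ne_zero_of_mul h23) (right_ne_zero_of_mul h23) hsep hBinv bV b3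
  refine ⟨_, mul_ne_zero (div_ne_zero hG h2) hq, ?_⟩
  rw [mul_div_mul_comm, hV]
  ring

/-- For every irreducible rational representation `ρ` of `S₃` with a `G`-invariant
positive-definite symmetric bilinear form `B`, the regulator constant
`det((1/6)B|ρ^{S₃})² · det(B|ρ) / (det((1/2)B|ρ^{C₂})² · det((1/3)B|ρ^{C₃}))`,
computed with respect to arbitrary bases of the fixed subspaces, is `3` up to the square
of a nonzero rational number. Here `C₂ = ⟨(0 1)⟩` and `C₃ = ⟨(0 1 2)⟩` inside
`S₃ = Perm (Fin 3)`. -/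
theorem regulator_constant_S3
    {V : Type} [AddCommGroup V] [Module ℚ V] [FiniteDimensional ℚ V] [Nontrivial V]
    (ρ : Representation ℚ (Equiv.Perm (Fin 3)) V)
    (hirr : ∀ U : Submodule ℚ V, (∀ g : Equiv.Perm (Fin 3), ∀ v ∈ U, ρ g v ∈ U) →
      U = ⊥ ∨ U = ⊤)
    (B : V →ₗ[ℚ] V →ₗ[ℚ] ℚ)
    (hBinv : ∀ (g : Equiv.Perm (Fin 3)) (v w : V), B (ρ g v) (ρ g w) = B v w)
    (hBsymm : ∀ v w : V, B v w = B w v)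
    (hBpos : ∀ v : V, v ≠ 0 → 0 < B v v)
    {dG dV d2 d3 : ℕ}
    (bG : Module.Basis (Fin dG) ℚ (fixedSubmodule ρ (⊤ : Subgroup (Equiv.Perm (Fin 3)))))
    (bV : Module.Basis (Fin dV) ℚ V)
    (b2 : Module.Basis (Fin d2) ℚ (fixedSubmodule ρ (Subgroup.zpowers (Equiv.swap (0 : Fin 3) 1))))
    (b3 : Module.Basis (Fin d3) ℚ (fixedSubmodule ρ (Subgroup.zpowers (finRotate 3)))) :
    ∃ q : ℚ, q ≠ 0 ∧
      ((Matrix.of fun a c : Fin dG => (6 : ℚ)⁻¹ * B (bG a : V) (bG c : V)).det) ^ 2 *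
          (Matrix.of fun a c : Fin dV => B (bV a) (bV c)).det /
        (((Matrix.of fun a c : Fin d2 => (2 : ℚ)⁻¹ * B (b2 a : V) (b2 c : V)).det) ^ 2 *
          (Matrix.of fun a c : Fin d3 => (3 : ℚ)⁻¹ * B (b3 a : V) (b3 c : V)).det) =
      3 * q ^ 2 := by
  obtain ⟨v, hv⟩ := exists_ne (0 : V)
  have hB : B ≠ 0 := fun h => (hBpos v hv).ne (by simp [h])
  exact regulator_constant_S3_general (by norm_num)
    (isIrreducible_iff_forall_submodule.2 ⟨inferInstance, hirr⟩) hB hBinv bG bV b2 b3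
end

section
/- Let p be an odd prime, let G be the group of affine permutations of 𝔽_p (all maps x ↦ ax + b with a ∈ 𝔽_p^*, b ∈ 𝔽_p, under composition), and let T ≤ G be the stabilizer of 0. Let V = { f : 𝔽_p → ℚ : Σ_{x ∈ 𝔽_p} f(x) = 0 } with G acting by (σ·f)(x) = f(σ^{-1}(x)). Then the fixed space V^{T} is one-dimensional, and for every G-invariant positive-definite symmetric ℚ-valued bilinear form B on V, any ℚ-basis e₁,…,e_{p−1} of V, and any nonzero w ∈ V^{T}, the quantity det(B(eᵢ,eⱼ))ᵢⱼ / ( B(w,w)/(p−1) )^{p−1} equals p·q² for some nonzero rational number q. -/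
/-- The group of affine permutations `x ↦ ax + b` (with `a ≠ 0`) of `𝔽_p`, as a subgroup of
the permutation group of `ZMod p`. -/
def affineGroup (p : ℕ) [Fact p.Prime] : Subgroup (Equiv.Perm (ZMod p)) where
  carrier := {σ | ∃ a b : ZMod p, a ≠ 0 ∧ ∀ x, σ x = a * x + b}
  one_mem' := ⟨1, 0, one_ne_zero, fun x => by simp⟩
  mul_mem' := by
    rintro σ τ ⟨a, b, ha, hσ⟩ ⟨c, d, hc, hτ⟩
    refine ⟨a * c, a * d + b, mul_ne_zero ha hc, fun x => ?_⟩
    rw [Equiv.Perm.mul_apply, hτ, hσ]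
    ring
  inv_mem' := by
    rintro σ ⟨a, b, ha, hσ⟩
    refine ⟨a⁻¹, -(a⁻¹ * b), inv_ne_zero ha, fun x => ?_⟩
    have h : σ (a⁻¹ * x + -(a⁻¹ * b)) = x := by
      rw [hσ]
      field_simp
      ring
    calc σ⁻¹ x = σ⁻¹ (σ (a⁻¹ * x + -(a⁻¹ * b))) := by rw [h]
      _ = a⁻¹ * x + -(a⁻¹ * b) := Equiv.symm_apply_apply σ _

/-- The stabilizer of `0` in the affine group: the maps `x ↦ ax`. -/
def affineStab (p : ℕ) [Fact p.Prime] : Subgroup (affineGroup p) where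
  carrier := {σ | (σ : Equiv.Perm (ZMod p)) 0 = 0}
  one_mem' := rfl
  mul_mem' := by
    intro σ τ hσ hτ
    show ((σ * τ : affineGroup p) : Equiv.Perm (ZMod p)) 0 = 0
    rw [Subgroup.coe_mul, Equiv.Perm.mul_apply, hτ, hσ]
  inv_mem' := by
    intro σ hσ
    show ((σ⁻¹ : affineGroup p) : Equiv.Perm (ZMod p)) 0 = 0
    rw [Subgroup.coe_inv]
    conv_lhs => rw [← hσ]
    exact Equiv.symm_apply_apply (σ : Equiv.Perm (ZMod p)) _

/-- The space of mean-zero rational-valued functions on `𝔽_p`. -/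
def meanZero (p : ℕ) [Fact p.Prime] : Submodule ℚ (ZMod p → ℚ) where
  carrier := {f | ∑ x, f x = 0}
  add_mem' := by
    intro a b ha hb
    simp only [Set.mem_setOf_eq] at *
    simp [Finset.sum_add_distrib, ha, hb]
  zero_mem' := by simp
  smul_mem' := by
    intro c f hf
    simp only [Set.mem_setOf_eq] at *
    simp [Pi.smul_apply, ← Finset.mul_sum, hf]

/-- The representation of the affine group of `𝔽_p` on mean-zero rational functions on
`𝔽_p`, by `(σ·f)(x) = f(σ⁻¹ x)`. -/
noncomputable def meanZeroRep (p : ℕ) [Fact p.Prime] :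
    Representation ℚ (affineGroup p) (meanZero p) where
  toFun σ :=
    { toFun := fun f => ⟨fun x => (f : ZMod p → ℚ) (((σ⁻¹ : affineGroup p) :
          Equiv.Perm (ZMod p)) x), by
        have h := Equiv.sum_comp (((σ⁻¹ : affineGroup p) : Equiv.Perm (ZMod p)))
          (f : ZMod p → ℚ)
        exact h.trans f.2⟩
      map_add' := fun f g => rfl
      map_smul' := fun c f => rfl }
  map_one' := by
    ext f x
    simp
  map_mul' := by
    intro σ τ
    ext f x
    simp [mul_inv_rev, Equiv.Perm.mul_apply]

/-!
Let `G` act doubly transitively on a finite set `X` of odd size `n`, and let `V` be the space of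
functions on `X` with sum zero, over a field in which `n` is invertible. The vectors `n δ_x - 1`
span `V` and `G` permutes them as it permutes the points, so an invariant form `B` takes only two
values on pairs of them; hence `B` is a multiple `k` of the dot product. Adjoining the constant
function `1` to a basis of `V` gives a square matrix whose Gram matrix is block diagonal, with
blocks the Gram matrix of the basis and `(n)`; its determinant is a square, so the dot product has
Gram determinant `n` up to squares. Passing to `B` multiplies this by `k ^ (n - 1)`, a square
because `n` is odd, and for the same reason the normalization by `B(w, w)` is immaterial.
-/

section DoublyTransitive

variable {G X : Type*} [Group G] [MulAction G X] [MulAction.IsMultiplyPretransitive G X 2]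

theorem exists_smul_eq_and_smul_eq {a b c d : X} (hab : a ≠ b) (hcd : c ≠ d) :
    ∃ g : G, g • a = c ∧ g • b = d :=
  MulAction.is_two_pretransitive_iff.mp inferInstance hab hcd

variable [DecidableEq X] [Nontrivial X] {α : Type*}

theorem exists_eq_ite_of_smul_invariant {φ : X → X → α}
    (hφ : ∀ (g : G) x y, φ (g • x) (g • y) = φ x y) :
    ∃ a b, ∀ x y, φ x y = if x = y then a else b := by
  obtain ⟨x₀, y₀, h₀⟩ := exists_pair_ne X
  refine ⟨φ x₀ x₀, φ x₀ y₀, fun x y => ?_⟩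
  split_ifs with hxy
  · obtain ⟨z, hz⟩ := exists_ne x
    obtain ⟨g, rfl, -⟩ := exists_smul_eq_and_smul_eq (G := G) h₀ hz.symm
    rw [← hxy, hφ]
  · obtain ⟨g, rfl, rfl⟩ := exists_smul_eq_and_smul_eq (G := G) h₀ hxy
    exact hφ g x₀ y₀

end DoublyTransitive

section Gram

open Matrix

variable {ι X : Type*} [Fintype ι] [DecidableEq ι] [Fintype X]

theorem exists_det_mul_transpose_eq_sq {R : Type*} [CommRing R]
    (hcard : Fintype.card ι = Fintype.card X) (N : Matrix ι X R) :
    ∃ d, (N * Nᵀ).det = d ^ 2 := by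
  let φ : ι ≃ X := Fintype.equivOfCardEq hcard
  refine ⟨(N.submatrix id φ).det, ?_⟩
  calc (N * Nᵀ).det = (N.submatrix id φ * (N.submatrix id φ)ᵀ).det := by
        rw [transpose_submatrix, submatrix_mul_equiv, submatrix_id_id]
    _ = (N.submatrix id φ).det ^ 2 := by rw [det_mul, det_transpose, sq]

theorem exists_det_mul_transpose_eq_card_mul_sq {K : Type*} [Field K]
    (hcard : Fintype.card ι + 1 = Fintype.card X) (hX : (Fintype.card X : K) ≠ 0)
    (F : Matrix ι X K) (hF : ∀ i, ∑ x, F i x = 0) :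
    ∃ d, (F * Fᵀ).det = Fintype.card X * d ^ 2 := by
  let N : Matrix (ι ⊕ Unit) X K := fromRows F (of fun _ _ => 1)
  have hN : N * Nᵀ = fromBlocks (F * Fᵀ) 0 0 (diagonal fun _ => (Fintype.card X : K)) := by
    rw [transpose_fromRows, fromRows_mul_fromCols]
    congr 1 <;> ext i j <;> simp [mul_apply, hF]
  obtain ⟨d, hd⟩ := exists_det_mul_transpose_eq_sq (by simpa using hcard) N
  have hdet : (F * Fᵀ).det * Fintype.card X = d ^ 2 := by
    rw [← hd, hN, det_fromBlocks_zero₂₁, det_diagonal, Fintype.prod_unique]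
  refine ⟨d / Fintype.card X, ?_⟩
  field_simp
  exact hdet

end Gram

section SumZero

variable (K X : Type*) [Fintype X]

/-- The `K`-valued functions on `X` with sum zero, the augmentation part of the permutation module
`X → K`. It is spelled out, rather than defined as a kernel, so that `meanZero p` unfolds to
`sumZero ℚ (ZMod p)`. -/
def sumZero [CommRing K] : Submodule K (X → K) where
  carrier := {f | ∑ x, f x = 0}
  add_mem' {f g} (hf : ∑ x, f x = 0) (hg : ∑ x, g x = 0) := by
    simp [Finset.sum_add_distrib, hf, hg]
  zero_mem' := by simp
  smul_mem' c f (hf : ∑ x, f x = 0) := by simp [← Finset.mul_sum, hf]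

variable (G : Type*) [Group G] [MulAction G X]

/-- The representation of `G` on `sumZero K X` by `(g • f) x = f (g⁻¹ • x)`. For the
affine group acting on `ZMod p` it agrees with `meanZeroRep p` by unfolding. -/
def sumZeroRep [CommRing K] : Representation K G (sumZero K X) where
  toFun g := (LinearMap.funLeft K K (g⁻¹ • · : X → X)).restrict fun f hf =>
    (Equiv.sum_comp (MulAction.toPerm g⁻¹) f).trans hf
  map_one' := by
    ext f x
    simp
  map_mul' g h := by
    ext f x
    change f.1 ((g * h)⁻¹ • x) = f.1 (h⁻¹ • g⁻¹ • x)
    rw [mul_inv_rev, mul_smul]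

variable {K X G}

theorem sumZeroRep_apply [CommRing K] (g : G) (f : sumZero K X) (x : X) :
    (sumZeroRep K X G g f).1 x = f.1 (g⁻¹ • x) := rfl

theorem sumZero.sum_eq_zero [CommRing K] (f : sumZero K X) : ∑ x, f.1 x = 0 := f.2

theorem finrank_sumZero_add_one [Field K] [Nonempty X] :
    Module.finrank K (sumZero K X) + 1 = Fintype.card X := by
  classical
  let sum : Module.Dual K (X → K) := ∑ x, LinearMap.proj x
  have hker : sumZero K X = LinearMap.ker sum := by
    ext f
    simp [sum, sumZero]
  have hsum : sum ≠ 0 := fun h => by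
    obtain ⟨x⟩ := ‹Nonempty X›
    simpa [sum] using LinearMap.congr_fun h (Pi.single x 1)
  rw [hker, Module.Dual.finrank_ker_add_one_of_ne_zero hsum, Module.finrank_fintype_fun_eq_card]

section centeredDelta

variable [CommRing K] [DecidableEq X]

variable (K) in
/-- The projection of `δ_x` to the functions of sum zero, multiplied by `card X` to avoid
denominators. -/
def centeredDelta (x : X) : sumZero K X :=
  ⟨fun y => (if x = y then (Fintype.card X : K) else 0) - 1, by simp [sumZero]⟩

theorem centeredDelta_apply (x y : X) :
    (centeredDelta K x).1 y = (if x = y then (Fintype.card X : K) else 0) - 1 := rfl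

theorem centeredDelta_ne_zero [Nontrivial K] [Nontrivial X] (x : X) : centeredDelta K x ≠ 0 := by
  obtain ⟨y, hy⟩ := exists_ne x
  intro h
  have hxy : (centeredDelta K x).1 y = 0 := by rw [h]; rfl
  simp [centeredDelta_apply, hy.symm] at hxy

theorem sumZeroRep_centeredDelta (g : G) (x : X) :
    sumZeroRep K X G g (centeredDelta K x) = centeredDelta K (g • x) := by
  ext y
  simp only [sumZeroRep_apply, centeredDelta_apply, eq_inv_smul_iff]

theorem sum_smul_centeredDelta (f : sumZero K X) :
    ∑ x, f.1 x • centeredDelta K x = (Fintype.card X : K) • f := by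
  ext y
  simp [centeredDelta_apply, mul_sub, Finset.sum_sub_distrib, sumZero.sum_eq_zero f,
    mul_comm (f.1 y)]

theorem dotProduct_centeredDelta (f : sumZero K X) (x : X) :
    f.1 ⬝ᵥ (centeredDelta K x).1 = Fintype.card X * f.1 x := by
  simp [dotProduct, centeredDelta_apply, mul_sub, Finset.sum_sub_distrib, sumZero.sum_eq_zero f,
    mul_comm (f.1 x)]

theorem eq_smul_centeredDelta_of_forall_ne {f : sumZero K X} {x : X} {c : K}
    (hf : ∀ y ≠ x, f.1 y = c) : f = -c • centeredDelta K x := by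
  have hsum : ∑ y, (f.1 y - c) = f.1 x - c :=
    Fintype.sum_eq_single x fun y hy => sub_eq_zero.mpr (hf y hy)
  rw [Finset.sum_sub_distrib, sumZero.sum_eq_zero f, Finset.sum_const, Finset.card_univ,
    nsmul_eq_mul] at hsum
  ext y
  change f.1 y = -c * (centeredDelta K x).1 y
  rw [centeredDelta_apply]
  split_ifs with hxy
  · subst hxy
    linear_combination -hsum
  · rw [hf y (Ne.symm hxy)]
    ring

end centeredDelta

section InvariantForm

variable [MulAction.IsMultiplyPretransitive G X 2] [Nontrivial X] [Field K]
  {B : sumZero K X →ₗ[K] sumZero K X →ₗ[K] K}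

theorem exists_eq_mul_dotProduct_of_invariant (hX : (Fintype.card X : K) ≠ 0)
    (hB : ∀ (g : G) v w, B (sumZeroRep K X G g v) (sumZeroRep K X G g w) = B v w) :
    ∃ k : K, ∀ f g : sumZero K X, B f g = k * (f.1 ⬝ᵥ g.1) := by
  classical
  obtain ⟨a, b, hab⟩ := exists_eq_ite_of_smul_invariant (G := G)
    (φ := fun x y : X => B (centeredDelta K x) (centeredDelta K y)) fun g x y => by
      simp only [← sumZeroRep_centeredDelta, hB]
  set n : K := (Fintype.card X : K)
  have hdelta (f : sumZero K X) (y : X) : n * B f (centeredDelta K y) = (a - b) * f.1 y :=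
    calc n * B f (centeredDelta K y)
        = B (∑ x, f.1 x • centeredDelta K x) (centeredDelta K y) := by
          rw [sum_smul_centeredDelta, map_smul, LinearMap.smul_apply, smul_eq_mul]
      _ = ∑ x, f.1 x * if x = y then a else b := by
          simp only [map_sum, map_smul, LinearMap.sum_apply, LinearMap.smul_apply, smul_eq_mul, hab]
      _ = ∑ x, (f.1 x * b + if x = y then (a - b) * f.1 x else 0) :=
          Finset.sum_congr rfl fun x _ => by split_ifs <;> ring
      _ = (a - b) * f.1 y := by
          simp [Finset.sum_add_distrib, ← Finset.sum_mul, sumZero.sum_eq_zero f]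
  refine ⟨(a - b) / n ^ 2, fun f g => ?_⟩
  have hfg : n ^ 2 * B f g = (a - b) * (f.1 ⬝ᵥ g.1) :=
    calc n ^ 2 * B f g = n * B f (∑ y, g.1 y • centeredDelta K y) := by
          rw [sum_smul_centeredDelta, map_smul, smul_eq_mul]
          ring
      _ = ∑ y, g.1 y * (n * B f (centeredDelta K y)) := by
          simp only [map_sum, map_smul, smul_eq_mul, Finset.mul_sum, mul_left_comm]
      _ = (a - b) * (f.1 ⬝ᵥ g.1) := by
          rw [dotProduct, Finset.mul_sum]
          exact Finset.sum_congr rfl fun y _ => by rw [hdelta]; ring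
  rw [div_mul_eq_mul_div, eq_div_iff (pow_ne_zero 2 hX), mul_comm, hfg]

theorem exists_det_eq_card_mul_sq_of_invariant (hodd : Odd (Fintype.card X))
    (hX : (Fintype.card X : K) ≠ 0)
    (hB : ∀ (g : G) v w, B (sumZeroRep K X G g v) (sumZeroRep K X G g w) = B v w) (hB₀ : B ≠ 0)
    {ι : Type*} [Fintype ι] [DecidableEq ι] (e : Module.Basis ι K (sumZero K X)) :
    ∃ q : K, q ≠ 0 ∧ (Matrix.of fun i j => B (e i) (e j)).det = Fintype.card X * q ^ 2 := by
  classical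
  obtain ⟨k, hk⟩ := exists_eq_mul_dotProduct_of_invariant hX hB
  have hk₀ : k ≠ 0 := by
    rintro rfl
    exact hB₀ (LinearMap.ext₂ fun f g => by simp [hk])
  have hsep : B.SeparatingLeft := fun f hf => by
    ext x
    simpa [hk, hk₀, hX, dotProduct_centeredDelta] using hf (centeredDelta K x)
  have hdet : (Matrix.of fun i j => B (e i) (e j)).det ≠ 0 := by
    convert (LinearMap.separatingLeft_iff_det_ne_zero e).mp hsep using 2
    ext i j
    simp [LinearMap.toMatrix₂_apply]
  have hcard : Fintype.card ι + 1 = Fintype.card X := by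
    rw [← Module.finrank_eq_card_basis e, finrank_sumZero_add_one]
  obtain ⟨m, hm⟩ : ∃ m, Fintype.card ι = 2 * m := by
    obtain ⟨m, hm⟩ := hodd
    exact ⟨m, by lia⟩
  let F : Matrix ι X K := .of fun i => (e i).1
  obtain ⟨d, hd⟩ := exists_det_mul_transpose_eq_card_mul_sq hcard hX F fun i => (e i).2
  have hgram : (Matrix.of fun i j => B (e i) (e j)) = k • (F * F.transpose) := by
    ext i j
    exact hk (e i) (e j)
  have hq : (Matrix.of fun i j => B (e i) (e j)).det = Fintype.card X * (k ^ m * d) ^ 2 := by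
    rw [hgram, Matrix.det_smul, hd, hm]
    ring
  exact ⟨k ^ m * d, fun h => hdet (by simpa [h] using hq), hq⟩

end InvariantForm

end SumZero

theorem finrank_fixedSubmodule_stabilizer {K G X : Type} [CommRing K] [IsDomain K] [Group G]
    [Fintype X] [Nontrivial X] [MulAction G X] [MulAction.IsMultiplyPretransitive G X 2] (x : X) :
    Module.finrank K (fixedSubmodule (sumZeroRep K X G) (MulAction.stabilizer G x)) = 1 := by
  classical
  have hmem : centeredDelta K x ∈ fixedSubmodule (sumZeroRep K X G) (MulAction.stabilizer G x) :=
    fun g hg => by rw [sumZeroRep_centeredDelta, MulAction.mem_stabilizer_iff.mp hg]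
  refine finrank_eq_one (⟨_, hmem⟩ : fixedSubmodule (sumZeroRep K X G) _)
    (fun h => centeredDelta_ne_zero x (congrArg Subtype.val h)) ?_
  rintro ⟨f, hf⟩
  obtain ⟨z, hz⟩ := exists_ne x
  have hconst (y : X) (hy : y ≠ x) : f.1 y = f.1 z := by
    obtain ⟨g, hgx, hgy⟩ := exists_smul_eq_and_smul_eq (G := G) hy.symm hz.symm
    calc f.1 y = (sumZeroRep K X G g f).1 (g • y) := by rw [sumZeroRep_apply, inv_smul_smul]
      _ = f.1 z := by rw [hf g hgx, hgy]
  exact ⟨-f.1 z, Subtype.ext (eq_smul_centeredDelta_of_forall_ne hconst).symm⟩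

theorem regulator_constant_affineGroup_general {K G X : Type} [Field K] [Group G] [Fintype X]
    [MulAction G X] [MulAction.IsMultiplyPretransitive G X 2] (hodd : Odd (Fintype.card X))
    (hX₀ : (Fintype.card X : K) ≠ 0) (hX₁ : (Fintype.card X : K) ≠ 1) (x : X) :
    Module.finrank K (fixedSubmodule (sumZeroRep K X G) (MulAction.stabilizer G x)) = 1 ∧
    ∀ B : sumZero K X →ₗ[K] sumZero K X →ₗ[K] K,
      (∀ (g : G) (v w : sumZero K X),
        B (sumZeroRep K X G g v) (sumZeroRep K X G g w) = B v w) →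
      ∀ {ι : Type*} [Fintype ι] [DecidableEq ι] (e : Module.Basis ι K (sumZero K X)),
      ∀ w : sumZero K X, B w w ≠ 0 →
      ∃ q : K, q ≠ 0 ∧
        (Matrix.of fun i j => B (e i) (e j)).det /
          (B w w / ((Fintype.card X : K) - 1)) ^ (Fintype.card X - 1) =
        Fintype.card X * q ^ 2 := by
  have : Nontrivial X := Fintype.one_lt_card_iff_nontrivial.mp <| by
    refine lt_of_le_of_ne hodd.pos fun h => hX₁ ?_
    rw [← h, Nat.cast_one]
  refine ⟨finrank_fixedSubmodule_stabilizer x, fun B hB _ _ _ e w hw => ?_⟩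
  obtain ⟨q, hq₀, hq⟩ := exists_det_eq_card_mul_sq_of_invariant hodd hX₀ hB
    (fun h => hw (by simp [h])) e
  obtain ⟨m, hm⟩ := hodd
  have hs : B w w / ((Fintype.card X : K) - 1) ≠ 0 := div_ne_zero hw (sub_ne_zero.mpr hX₁)
  generalize B w w / ((Fintype.card X : K) - 1) = s at hs ⊢
  refine ⟨q / s ^ m, div_ne_zero hq₀ (pow_ne_zero m hs), ?_⟩
  rw [hq, show Fintype.card X - 1 = m * 2 by lia, pow_mul, div_pow, mul_div_assoc]

section AffineGroup

variable {p : ℕ} [Fact p.Prime]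

theorem exists_mem_affineGroup_apply {a b c d : ZMod p} (hab : a ≠ b) (hcd : c ≠ d) :
    ∃ σ ∈ affineGroup p, σ a = c ∧ σ b = d := by
  have hba : b - a ≠ 0 := sub_ne_zero.mpr hab.symm
  have hs : (d - c) / (b - a) ≠ 0 := div_ne_zero (sub_ne_zero.mpr hcd.symm) hba
  let σ : Equiv.Perm (ZMod p) :=
    (Equiv.mulLeft₀ _ hs).trans (Equiv.addRight (c - (d - c) / (b - a) * a))
  have hσ (x : ZMod p) : σ x = (d - c) / (b - a) * x + (c - (d - c) / (b - a) * a) := rfl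
  refine ⟨σ, ⟨_, _, hs, hσ⟩, ?_, ?_⟩
  · rw [hσ]
    ring
  · rw [hσ]
    field_simp
    ring

instance affineGroup.isMultiplyPretransitive :
    MulAction.IsMultiplyPretransitive (affineGroup p) (ZMod p) 2 :=
  MulAction.is_two_pretransitive_iff.mpr fun hab hcd =>
    let ⟨σ, hσ, hσab⟩ := exists_mem_affineGroup_apply hab hcd
    ⟨⟨σ, hσ⟩, hσab⟩

end AffineGroup

/-- With `G` the affine group of `𝔽_p`, `T` the stabilizer of `0` and `V` the mean-zero
rational functions on `𝔽_p`: the fixed space `V^T` is one-dimensional, and for every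
`G`-invariant positive-definite symmetric bilinear form `B` on `V`, every basis `e` of `V`
and every nonzero `w ∈ V^T`, the quantity `det(B(eᵢ,eⱼ)) / (B(w,w)/(p−1))^{p−1}` is `p`
times a nonzero rational square. -/
theorem regulator_constant_affineGroup (p : ℕ) [Fact p.Prime] (hodd : Odd p) :
    Module.finrank ℚ (fixedSubmodule (meanZeroRep p) (affineStab p)) = 1 ∧
    ∀ B : (meanZero p) →ₗ[ℚ] (meanZero p) →ₗ[ℚ] ℚ,
      (∀ (g : affineGroup p) (v w : meanZero p),
        B (meanZeroRep p g v) (meanZeroRep p g w) = B v w) →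
      (∀ v w : meanZero p, B v w = B w v) →
      (∀ v : meanZero p, v ≠ 0 → 0 < B v v) →
      ∀ e : Module.Basis (Fin (p - 1)) ℚ (meanZero p),
      ∀ w : meanZero p, w ∈ fixedSubmodule (meanZeroRep p) (affineStab p) → w ≠ 0 →
      ∃ q : ℚ, q ≠ 0 ∧
        (Matrix.of fun i j => B (e i) (e j)).det / (B w w / ((p : ℚ) - 1)) ^ (p - 1) =
          p * q ^ 2 := by
  have h := regulator_constant_affineGroup_general (K := ℚ) (G := affineGroup p) (X := ZMod p)
    (by rwa [ZMod.card]) (by simp [NeZero.ne p])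
    (by simpa using (Fact.out : p.Prime).ne_one) 0
  rw [ZMod.card] at h
  exact ⟨h.1, fun B hB _ hpos e w _ hw => h.2 B hB e w (hpos w hw).ne'⟩
end

section
/- Let G = A₅ be the alternating group on {1,2,3,4,5}, let C₂ = ⟨(1 2)(3 4)⟩ and let V₄ = {id, (1 2)(3 4), (1 3)(2 4), (1 4)(2 3)} be the Klein four-subgroup. Then there is an isomorphism of complex representations of A₅: ℂ[G/1] ⊕ (ℂ[G/V₄])^{⊕2} ≅ (ℂ[G/C₂])^{⊕3}. -/
namespace Stmt13

/-- `(0 1)(2 3)` as an element of `A₅`. -/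
def a : alternatingGroup (Fin 5) :=
  ⟨Equiv.swap 0 1 * Equiv.swap 2 3, by
    rw [Equiv.Perm.mem_alternatingGroup, map_mul,
      Equiv.Perm.sign_swap (by decide), Equiv.Perm.sign_swap (by decide)]
    decide⟩

/-- `(0 2)(1 3)` as an element of `A₅`. -/
def b : alternatingGroup (Fin 5) :=
  ⟨Equiv.swap 0 2 * Equiv.swap 1 3, by
    rw [Equiv.Perm.mem_alternatingGroup, map_mul,
      Equiv.Perm.sign_swap (by decide), Equiv.Perm.sign_swap (by decide)]
    decide⟩

/-- `(0 3)(1 2)` as an element of `A₅`. -/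
def c : alternatingGroup (Fin 5) :=
  ⟨Equiv.swap 0 3 * Equiv.swap 1 2, by
    rw [Equiv.Perm.mem_alternatingGroup, map_mul,
      Equiv.Perm.sign_swap (by decide), Equiv.Perm.sign_swap (by decide)]
    decide⟩

/-- The subgroup `C₂ = ⟨(0 1)(2 3)⟩` of `A₅`. -/
def C2 : Subgroup (alternatingGroup (Fin 5)) := Subgroup.zpowers a

/-- The Klein four-subgroup `V₄ = {1, (0 1)(2 3), (0 2)(1 3), (0 3)(1 2)}` of `A₅`. -/
def V4 : Subgroup (alternatingGroup (Fin 5)) where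
  carrier := {x | x = 1 ∨ x = a ∨ x = b ∨ x = c}
  one_mem' := Or.inl rfl
  mul_mem' := by
    intro x y hx hy
    simp only [Set.mem_setOf_eq] at *
    rcases hx with h | h | h | h <;> rcases hy with h' | h' | h' | h' <;>
      subst h <;> subst h' <;>
      first
        | exact Or.inl (by ext1; decide)
        | exact Or.inr (Or.inl (by ext1; decide))
        | exact Or.inr (Or.inr (Or.inl (by ext1; decide)))
        | exact Or.inr (Or.inr (Or.inr (by ext1; decide)))
  inv_mem' := by
    intro x hx
    simp only [Set.mem_setOf_eq] at *
    rcases hx with h | h | h | h <;> subst h <;>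
      first
        | exact Or.inl (by ext1; decide)
        | exact Or.inr (Or.inl (by ext1; decide))
        | exact Or.inr (Or.inr (Or.inl (by ext1; decide)))
        | exact Or.inr (Or.inr (Or.inr (by ext1; decide)))

/-!
Let `a`, `b` be commuting involutions of a group `G` and `V = ⟨a, b⟩`. A `G`-map from `k[G/H]` to a
representation `W` is the same as an `H`-fixed vector of `W`, so by Yoneda an isomorphism
`k[G/1] ⊕ k[G/V]² ≅ k[G/⟨a⟩] ⊕ k[G/⟨b⟩] ⊕ k[G/⟨ab⟩]` amounts to a natural bijection between triples
`x, y, z` fixed by `a`, `b`, `ab` and a vector `u` together with two `V`-fixed vectors. It is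
`u = x + y + z`, `v₀ = x + b x`, `v₁ = y + a y`, and it can be inverted as soon as `2` is a unit:
averaging over `V` with the three nontrivial characters of `V` separates `x - b x`, `y - a y` and
`z - a z` in `u`. When `a`, `b` and `ab` are conjugate in `G`, the three summands on the right are
isomorphic; in `A₅` a 3-cycle permutes them.
-/

open Representation
open scoped MonoidAlgebra Pointwise

section PermutationRepresentation

variable {k G X W : Type*} [CommSemiring k] [Group G] [MulAction G X] [AddCommMonoid W] [Module k W]

/-- The intertwining map `k[X] → W` that extends a `G`-equivariant map `f : X → W` linearly. -/
noncomputable def permRepLift (ρ : Representation k G W) (f : X → W)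
    (hf : ∀ (g : G) x, f (g • x) = ρ g (f x)) : (ofMulAction k G X).IntertwiningMap ρ where
  toLinearMap := Finsupp.linearCombination k f ∘ₗ (MonoidAlgebra.coeffLinearEquiv k).toLinearMap
  isIntertwining' g := by ext x; simp [hf]

@[simp]
theorem permRepLift_single (ρ : Representation k G W) (f : X → W)
    (hf : ∀ (g : G) x, f (g • x) = ρ g (f x)) (x : X) :
    permRepLift ρ f hf (.single x 1) = f x := by
  simp [permRepLift, ← IntertwiningMap.toLinearMap_apply]

theorem intertwiningMap_ext_of_orbits {ρ : Representation k G W}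
    {F F' : (ofMulAction k G X).IntertwiningMap ρ}
    (h : ∀ x, ∃ g : G, F (.single (g • x) 1) = F' (.single (g • x) 1)) : F = F' := by
  ext x
  obtain ⟨g, hg⟩ := h x
  rw [← ofMulAction_single, F.isIntertwining, F'.isIntertwining] at hg
  exact (ρ.apply_bijective g).injective hg

/-- The isomorphism `k[X] ≅ k[Y]` induced by an isomorphism `X ≃ Y` of `G`-sets. -/
noncomputable def permRepCongr (k : Type*) [CommSemiring k] {Y : Type*} [MulAction G Y] (e : X ≃ Y)
    (he : ∀ (g : G) x, e (g • x) = g • e x) : (ofMulAction k G X).Equiv (ofMulAction k G Y) :=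
  .mk (MonoidAlgebra.mapDomainLinearEquiv k k e) fun g ↦ by ext x; simp [he]

theorem exists_finsupp_linearEquiv {Y : Type*} [MulAction G Y]
    (φ : (ofMulAction k G X).Equiv (ofMulAction k G Y)) :
    ∃ e : (X →₀ k) ≃ₗ[k] (Y →₀ k), ∀ (g : G) v,
      e (ofMulAction k G X g (MonoidAlgebra.ofCoeff v)).coeff =
        (ofMulAction k G Y g (MonoidAlgebra.ofCoeff (e v))).coeff :=
  ⟨(MonoidAlgebra.coeffLinearEquiv k).symm ≪≫ₗ φ.toLinearEquiv ≪≫ₗ MonoidAlgebra.coeffLinearEquiv k,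
    fun g v ↦ congrArg MonoidAlgebra.coeff
      (φ.toIntertwiningMap.isIntertwining _ _ g (MonoidAlgebra.ofCoeff v))⟩

end PermutationRepresentation

section Cosets

variable {k G W : Type*} [CommSemiring k] [Group G] [AddCommMonoid W] [Module k W]
  {a b : G}

/-- The stabilizer in `G` of a vector `w` of a representation of `G`. -/
def vectorStabilizer (ρ : Representation k G W) (w : W) : Subgroup G where
  carrier := {g | ρ g w = w}
  one_mem' := by simp
  mul_mem' {g h} (hg : ρ g w = w) (hh : ρ h w = w) := by
    simp [hg, hh]
  inv_mem' {g} (hg : ρ g w = w) := by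
    simpa [hg] using ρ.inv_self_apply g w

theorem mem_vectorStabilizer {ρ : Representation k G W} {w : W} {g : G} :
    g ∈ vectorStabilizer ρ w ↔ ρ g w = w :=
  Iff.rfl

theorem closure_pair_le_vectorStabilizer {ρ : Representation k G W} {w : W} :
    Subgroup.closure {a, b} ≤ vectorStabilizer ρ w ↔ ρ a w = w ∧ ρ b w = w := by
  simp [Subgroup.closure_le, Set.insert_subset_iff, mem_vectorStabilizer]

theorem zpowers_le_vectorStabilizer {ρ : Representation k G W} {w : W} :
    Subgroup.zpowers a ≤ vectorStabilizer ρ w ↔ ρ a w = w := by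
  simp [mem_vectorStabilizer]

theorem apply_apply_of_mul_self (ρ : Representation k G W) (ha : a * a = 1) (w : W) :
    ρ a (ρ a w) = w := by
  rw [← Module.End.mul_apply, ← map_mul, ha, map_one, Module.End.one_apply]

theorem apply_comm_of_commute (ρ : Representation k G W) (hab : Commute a b) (w : W) :
    ρ b (ρ a w) = ρ a (ρ b w) :=
  (LinearMap.congr_fun (hab.map ρ) w).symm

/-- The `G`-equivariant map `G ⧸ H → W`, `gH ↦ g w`, attached to an `H`-fixed vector `w`. -/
def cosetLift {H : Subgroup G} (ρ : Representation k G W) (w : W)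
    (hw : H ≤ vectorStabilizer ρ w) : G ⧸ H → W :=
  Quotient.lift (fun g ↦ ρ g w) fun g g' h ↦ by
    have hfix : ρ (g⁻¹ * g') w = w := hw (QuotientGroup.leftRel_apply.mp h)
    calc ρ g w = ρ g (ρ (g⁻¹ * g') w) := by rw [hfix]
      _ = ρ g' w := by rw [← Module.End.mul_apply, ← map_mul, mul_inv_cancel_left]

theorem cosetLift_mk_one {H : Subgroup G} (ρ : Representation k G W) (w : W)
    (hw : H ≤ vectorStabilizer ρ w) : cosetLift ρ w hw (1 : G) = w :=
  congrArg (· w) (map_one ρ)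

theorem cosetLift_smul {H : Subgroup G} (ρ : Representation k G W) (w : W)
    (hw : H ≤ vectorStabilizer ρ w) (g : G) (q : G ⧸ H) :
    cosetLift ρ w hw (g • q) = ρ g (cosetLift ρ w hw q) := by
  induction q using QuotientGroup.induction_on with
  | H x => exact congrArg (· w) (map_mul ρ g x)

/-- The `G`-equivariant map `⊔ᵢ G ⧸ Hᵢ → W` attached to a family of `Hᵢ`-fixed vectors `wᵢ`. -/
def sigmaCosetLift {ι : Type*} {H : ι → Subgroup G} (ρ : Representation k G W) (w : ι → W)
    (hw : ∀ i, H i ≤ vectorStabilizer ρ (w i)) (p : Σ i, G ⧸ H i) : W :=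
  cosetLift ρ (w p.1) (hw p.1) p.2

theorem sigmaCosetLift_mk_one {ι : Type*} {H : ι → Subgroup G} (ρ : Representation k G W)
    (w : ι → W) (hw : ∀ i, H i ≤ vectorStabilizer ρ (w i)) (i : ι) :
    sigmaCosetLift ρ w hw ⟨i, (1 : G)⟩ = w i :=
  cosetLift_mk_one ρ (w i) (hw i)

theorem sigmaCosetLift_smul {ι : Type*} {H : ι → Subgroup G} (ρ : Representation k G W)
    (w : ι → W) (hw : ∀ i, H i ≤ vectorStabilizer ρ (w i)) (g : G) (p : Σ i, G ⧸ H i) :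
    sigmaCosetLift ρ w hw (g • p) = ρ g (sigmaCosetLift ρ w hw p) :=
  cosetLift_smul ρ (w p.1) (hw p.1) g p.2

theorem smul_mk_one_of_mem {H : Subgroup G} {h : G} (hh : h ∈ H) :
    h • ((1 : G) : G ⧸ H) = (1 : G) := by
  rw [MulAction.Quotient.smul_mk, QuotientGroup.eq]
  simpa using hh

/-- The isomorphism of `G`-sets `G ⧸ sKs⁻¹ ≃ G ⧸ K`, `g(sKs⁻¹) ↦ gsK`. -/
def quotientConjEquiv (s : G) (K : Subgroup G) : G ⧸ (MulAut.conj s • K) ≃ G ⧸ K :=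
  Quotient.congr (Equiv.mulRight s) fun g g' ↦ by
    change QuotientGroup.leftRel _ g g' ↔ QuotientGroup.leftRel _ (g * s) (g' * s)
    simp [QuotientGroup.leftRel_apply, Subgroup.mem_pointwise_smul_iff_inv_smul_mem, mul_assoc]

theorem quotientConjEquiv_smul (s : G) (K : Subgroup G) (g : G) (q : G ⧸ (MulAut.conj s • K)) :
    quotientConjEquiv s K (g • q) = g • quotientConjEquiv s K q := by
  induction q using QuotientGroup.induction_on with
  | H x => exact congrArg QuotientGroup.mk (mul_assoc g x s)

end Cosets

theorem exists_quotient_zpowers_equiv_of_isConj {G : Type*} [Group G] {x y : G} (h : IsConj x y) :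
    ∃ e : G ⧸ Subgroup.zpowers y ≃ G ⧸ Subgroup.zpowers x,
      ∀ (g : G) q, e (g • q) = g • e q := by
  obtain ⟨s, rfl⟩ := isConj_iff.mp h
  have hconj : Subgroup.zpowers (s * x * s⁻¹) = MulAut.conj s • Subgroup.zpowers x :=
    ((MulAut.conj s).toMonoidHom.map_zpowers x).symm
  rw [hconj]
  exact ⟨quotientConjEquiv s _, quotientConjEquiv_smul s _⟩

section FixedVectors

variable {k G W W' : Type*} [CommRing k] [Group G] [AddCommGroup W] [Module k W]
  [AddCommGroup W'] [Module k W'] {a b : G}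

/-- The partial norms `x + b x` and `y + a y` of a triple of vectors `x, y, z`. For `x` and `y`
fixed by `a` and `b` respectively these are the transfers to `⟨a, b⟩`-fixed vectors. -/
def transferPair (ρ : Representation k G W) (a b : G) (w : Fin 3 → W) : Fin 2 → W :=
  ![w 0 + ρ b (w 0), w 1 + ρ a (w 1)]

/-- The triple of vectors fixed by `a`, `b`, `a * b` with sum `u` and `transferPair` equal to `v`,
when `v` consists of `⟨a, b⟩`-fixed vectors. -/
def fixedTriple [Invertible (2 : k)] (ρ : Representation k G W) (a b : G) (u : W)
    (v : Fin 2 → W) : Fin 3 → W :=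
  ![(⅟2 * ⅟2 : k) • (u + ρ a u - ρ b u - ρ (a * b) u) + (⅟2 : k) • v 0,
    (⅟2 * ⅟2 : k) • (u - ρ a u + ρ b u - ρ (a * b) u) + (⅟2 : k) • v 1,
    (⅟2 : k) • (u + ρ (a * b) u - v 0 - v 1)]

theorem map_transferPair {ρ : Representation k G W} {σ : Representation k G W'}
    (F : ρ.IntertwiningMap σ) (w : Fin 3 → W) (j : Fin 2) :
    F (transferPair ρ a b w j) = transferPair σ a b (F ∘ w) j := by
  fin_cases j <;> simp [transferPair, F.isIntertwining]

theorem map_fixedTriple [Invertible (2 : k)] {ρ : Representation k G W}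
    {σ : Representation k G W'} (F : ρ.IntertwiningMap σ) (u : W) (v : Fin 2 → W) (i : Fin 3) :
    F (fixedTriple ρ a b u v i) = fixedTriple σ a b (F u) (F ∘ v) i := by
  fin_cases i <;> simp [fixedTriple, F.isIntertwining]

theorem transferPair_fixed {ρ : Representation k G W} (ha : a * a = 1) (hb : b * b = 1)
    (hab : Commute a b) {w : Fin 3 → W} (hw₀ : ρ a (w 0) = w 0) (hw₁ : ρ b (w 1) = w 1)
    (j : Fin 2) : ρ a (transferPair ρ a b w j) = transferPair ρ a b w j ∧
      ρ b (transferPair ρ a b w j) = transferPair ρ a b w j := by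
  fin_cases j
  · simp [transferPair, ← apply_comm_of_commute ρ hab, apply_apply_of_mul_self ρ hb, hw₀, add_comm]
  · simp [transferPair, apply_comm_of_commute ρ hab, apply_apply_of_mul_self ρ ha, hw₁, add_comm]

theorem fixedTriple_fixed [Invertible (2 : k)] {ρ : Representation k G W} (ha : a * a = 1)
    (hb : b * b = 1) (hab : Commute a b) (u : W) {v : Fin 2 → W}
    (hv : ∀ j, ρ a (v j) = v j ∧ ρ b (v j) = v j) (i : Fin 3) :
    ρ (![a, b, a * b] i) (fixedTriple ρ a b u v i) = fixedTriple ρ a b u v i := by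
  fin_cases i <;>
    simp only [fixedTriple, map_add, map_sub, map_smul, map_mul, Module.End.mul_apply,
      apply_comm_of_commute ρ hab, apply_apply_of_mul_self ρ ha, apply_apply_of_mul_self ρ hb, hv,
      Matrix.cons_val, Fin.zero_eta, Fin.mk_one, Fin.reduceFinMk] <;>
    module

theorem sum_fixedTriple [Invertible (2 : k)] (ρ : Representation k G W) (u : W) (v : Fin 2 → W) :
    ∑ i, fixedTriple ρ a b u v i = u := by
  simp only [Fin.sum_univ_three, fixedTriple, Matrix.cons_val]
  have h2 : (⅟2 * 2 : k) = 1 := invOf_mul_self 2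
  linear_combination (norm := module) ((⅟2 : k) * h2) • (u - ρ (a * b) u) + h2 • u

theorem transferPair_fixedTriple [Invertible (2 : k)] {ρ : Representation k G W} (ha : a * a = 1)
    (hb : b * b = 1) (hab : Commute a b) (u : W) {v : Fin 2 → W}
    (hv : ∀ j, ρ a (v j) = v j ∧ ρ b (v j) = v j) :
    transferPair ρ a b (fixedTriple ρ a b u v) = v := by
  ext j
  fin_cases j <;>
    simp only [transferPair, fixedTriple, map_add, map_sub, map_smul, map_mul,
      Module.End.mul_apply, apply_comm_of_commute ρ hab, apply_apply_of_mul_self ρ ha,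
      apply_apply_of_mul_self ρ hb, hv, Matrix.cons_val, Fin.zero_eta, Fin.mk_one]
  · linear_combination (norm := module) invOf_mul_self (2 : k) • v 0
  · linear_combination (norm := module) invOf_mul_self (2 : k) • v 1

theorem fixedTriple_transferPair [Invertible (2 : k)] {ρ : Representation k G W} (ha : a * a = 1)
    (hab : Commute a b) {w : Fin 3 → W}
    (hw : ∀ i, ρ (![a, b, a * b] i) (w i) = w i) :
    fixedTriple ρ a b (∑ i, w i) (transferPair ρ a b w) = w := by
  have hx : ρ a (w 0) = w 0 := hw 0
  have hy : ρ b (w 1) = w 1 := hw 1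
  have hz : ρ a (ρ b (w 2)) = w 2 := by simpa using hw 2
  have hx' : ρ a (ρ b (w 0)) = ρ b (w 0) := by rw [← apply_comm_of_commute ρ hab, hx]
  have hz' : ρ b (w 2) = ρ a (w 2) := by
    rw [← apply_apply_of_mul_self ρ ha (ρ b (w 2)), hz]
  have h2 : (⅟2 * 2 : k) = 1 := invOf_mul_self 2
  ext i
  fin_cases i <;>
    simp only [fixedTriple, transferPair, Fin.sum_univ_three, map_add, map_mul,
      Module.End.mul_apply, hx, hy, hx', hz', apply_apply_of_mul_self ρ ha, Matrix.cons_val,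
      Fin.zero_eta, Fin.mk_one, Fin.reduceFinMk]
  · linear_combination (norm := module) ((⅟2 : k) * h2) • (w 0 - ρ b (w 0)) + h2 • w 0
  · linear_combination (norm := module) ((⅟2 : k) * h2) • (w 1 - ρ a (w 1)) + h2 • w 1
  · linear_combination (norm := module) h2 • w 2

end FixedVectors

section KleinFour

variable (k : Type*) {G : Type*} [CommRing k] [Group G] (a b : G)

/-- The `G`-set `G/1 ⊔ G/V ⊔ G/V` for `V = ⟨a, b⟩`. -/
abbrev TrivialAndKleinCosets : Type _ :=
  (G ⧸ (⊥ : Subgroup G)) ⊕ (Σ _ : Fin 2, G ⧸ Subgroup.closure {a, b})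

/-- The `G`-set `G/⟨a⟩ ⊔ G/⟨b⟩ ⊔ G/⟨ab⟩`. -/
abbrev InvolutionCosets : Type _ :=
  Σ i : Fin 3, G ⧸ Subgroup.zpowers (![a, b, a * b] i)

/-- The basis vector of `k[G/1]` at the trivial coset. -/
noncomputable def trivialBase : k[TrivialAndKleinCosets a b] :=
  .single (.inl (1 : G)) 1

/-- The basis vector at the coset `V` in the `j`-th copy of `k[G/V]`. -/
noncomputable def kleinBase (j : Fin 2) : k[TrivialAndKleinCosets a b] :=
  .single (.inr ⟨j, (1 : G)⟩) 1

/-- The basis vector at the coset `⟨a⟩`, `⟨b⟩` or `⟨ab⟩`, for `i = 0, 1, 2`. -/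
noncomputable def involutionBase (i : Fin 3) : k[InvolutionCosets a b] :=
  .single ⟨i, (1 : G)⟩ 1

variable {k a b}

theorem kleinBase_fixed (j : Fin 2) :
    ofMulAction k G _ a (kleinBase k a b j) = kleinBase k a b j ∧
      ofMulAction k G _ b (kleinBase k a b j) = kleinBase k a b j := by
  have ha : a ∈ Subgroup.closure {a, b} := Subgroup.subset_closure (by simp)
  have hb : b ∈ Subgroup.closure {a, b} := Subgroup.subset_closure (by simp)
  simp only [kleinBase, ofMulAction_single, Sum.smul_inr, Sigma.smul_mk, smul_mk_one_of_mem ha,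
    smul_mk_one_of_mem hb, and_self]

theorem involutionBase_fixed (i : Fin 3) :
    ofMulAction k G _ (![a, b, a * b] i) (involutionBase k a b i) = involutionBase k a b i := by
  simp only [involutionBase, ofMulAction_single, Sigma.smul_mk,
    smul_mk_one_of_mem (Subgroup.mem_zpowers _)]

/-- The intertwining map `k[G/1] ⊕ k[G/V]² → k[G/⟨a⟩] ⊕ k[G/⟨b⟩] ⊕ k[G/⟨ab⟩]` given by the sum and
the `transferPair` of the base points. -/
noncomputable def toInvolutionCosets (ha : a * a = 1) (hb : b * b = 1) (hab : Commute a b) :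
    (ofMulAction k G (TrivialAndKleinCosets a b)).IntertwiningMap
      (ofMulAction k G (InvolutionCosets a b)) :=
  have hfixed (j : Fin 2) : Subgroup.closure {a, b} ≤ vectorStabilizer (ofMulAction k G _)
      (transferPair (ofMulAction k G _) a b (involutionBase k a b) j) :=
    closure_pair_le_vectorStabilizer.mpr
      (transferPair_fixed ha hb hab (involutionBase_fixed 0) (involutionBase_fixed 1) j)
  permRepLift _
    (Sum.elim (cosetLift _ (∑ i, involutionBase k a b i) bot_le) (sigmaCosetLift _ _ hfixed))
    (by
      rintro g (q | p)
      exacts [cosetLift_smul _ _ bot_le g q, sigmaCosetLift_smul _ _ hfixed g p])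

/-- The inverse of `toInvolutionCosets`, given by the `fixedTriple` of the base points. -/
noncomputable def ofInvolutionCosets [Invertible (2 : k)] (ha : a * a = 1) (hb : b * b = 1)
    (hab : Commute a b) :
    (ofMulAction k G (InvolutionCosets a b)).IntertwiningMap
      (ofMulAction k G (TrivialAndKleinCosets a b)) :=
  permRepLift _
    (sigmaCosetLift _ (fixedTriple (ofMulAction k G _) a b (trivialBase k a b) (kleinBase k a b))
      fun i ↦ zpowers_le_vectorStabilizer.mpr (fixedTriple_fixed ha hb hab _ kleinBase_fixed i))
    (sigmaCosetLift_smul _ _ _)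

variable (ha : a * a = 1) (hb : b * b = 1) (hab : Commute a b)

theorem toInvolutionCosets_trivialBase :
    toInvolutionCosets ha hb hab (trivialBase k a b) = ∑ i, involutionBase k a b i := by
  rw [toInvolutionCosets, trivialBase, permRepLift_single, Sum.elim_inl, cosetLift_mk_one]

theorem toInvolutionCosets_kleinBase (j : Fin 2) :
    toInvolutionCosets ha hb hab (kleinBase k a b j) =
      transferPair (ofMulAction k G _) a b (involutionBase k a b) j := by
  rw [toInvolutionCosets, kleinBase, permRepLift_single, Sum.elim_inr, sigmaCosetLift_mk_one]

theorem ofInvolutionCosets_involutionBase [Invertible (2 : k)] (i : Fin 3) :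
    ofInvolutionCosets ha hb hab (involutionBase k a b i) =
      fixedTriple (ofMulAction k G _) a b (trivialBase k a b) (kleinBase k a b) i := by
  rw [ofInvolutionCosets, involutionBase, permRepLift_single, sigmaCosetLift_mk_one]

theorem toInvolutionCosets_comp_ofInvolutionCosets [Invertible (2 : k)] :
    (toInvolutionCosets ha hb hab).comp (ofInvolutionCosets ha hb hab) =
      .id (ofMulAction k G (InvolutionCosets a b)) := by
  have hbase : toInvolutionCosets ha hb hab ∘ kleinBase k a b =
      transferPair (ofMulAction k G _) a b (involutionBase k a b) :=
    funext (toInvolutionCosets_kleinBase ha hb hab)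
  refine intertwiningMap_ext_of_orbits fun ⟨i, q⟩ ↦ ?_
  obtain ⟨g, hg⟩ := MulAction.exists_smul_eq G q (1 : G)
  refine ⟨g, ?_⟩
  rw [Sigma.smul_mk, hg, ← involutionBase]
  calc toInvolutionCosets ha hb hab (ofInvolutionCosets ha hb hab (involutionBase k a b i))
    _ = fixedTriple (ofMulAction k G _) a b (∑ i, involutionBase k a b i)
          (transferPair (ofMulAction k G _) a b (involutionBase k a b)) i := by
      rw [ofInvolutionCosets_involutionBase, map_fixedTriple, toInvolutionCosets_trivialBase,
        hbase]
    _ = involutionBase k a b i :=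
      congrFun (fixedTriple_transferPair ha hab involutionBase_fixed) i

theorem ofInvolutionCosets_comp_toInvolutionCosets [Invertible (2 : k)] :
    (ofInvolutionCosets ha hb hab).comp (toInvolutionCosets ha hb hab) =
      .id (ofMulAction k G (TrivialAndKleinCosets a b)) := by
  have hbase : ofInvolutionCosets ha hb hab ∘ involutionBase k a b =
      fixedTriple (ofMulAction k G _) a b (trivialBase k a b) (kleinBase k a b) :=
    funext (ofInvolutionCosets_involutionBase ha hb hab)
  refine intertwiningMap_ext_of_orbits fun x ↦ ?_
  obtain q | ⟨j, q⟩ := x <;>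
    obtain ⟨g, hg⟩ := MulAction.exists_smul_eq G q (1 : G) <;>
    refine ⟨g, ?_⟩
  · rw [Sum.smul_inl, hg, ← trivialBase]
    calc ofInvolutionCosets ha hb hab (toInvolutionCosets ha hb hab (trivialBase k a b))
      _ = ∑ i, fixedTriple (ofMulAction k G _) a b (trivialBase k a b) (kleinBase k a b) i := by
        simp only [toInvolutionCosets_trivialBase, map_sum, ofInvolutionCosets_involutionBase]
      _ = trivialBase k a b := sum_fixedTriple _ _ _
  · rw [Sum.smul_inr, Sigma.smul_mk, hg, ← kleinBase]
    calc ofInvolutionCosets ha hb hab (toInvolutionCosets ha hb hab (kleinBase k a b j))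
      _ = transferPair (ofMulAction k G _) a b
            (fixedTriple (ofMulAction k G _) a b (trivialBase k a b) (kleinBase k a b)) j := by
        rw [toInvolutionCosets_kleinBase, map_transferPair, hbase]
      _ = kleinBase k a b j :=
        congrFun (transferPair_fixedTriple ha hb hab _ kleinBase_fixed) j

/-- The isomorphism `k[G/1] ⊕ k[G/V]² ≅ k[G/⟨a⟩] ⊕ k[G/⟨b⟩] ⊕ k[G/⟨ab⟩]`. -/
noncomputable def kleinFourPermRepEquiv [Invertible (2 : k)] :
    (ofMulAction k G (TrivialAndKleinCosets a b)).Equiv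
      (ofMulAction k G (InvolutionCosets a b)) :=
  .mk
    (.ofLinearMap (toInvolutionCosets ha hb hab).toLinearMap
      (ofInvolutionCosets ha hb hab).toLinearMap
      (congrArg IntertwiningMap.toLinearMap (toInvolutionCosets_comp_ofInvolutionCosets ha hb hab))
      (congrArg IntertwiningMap.toLinearMap (ofInvolutionCosets_comp_toInvolutionCosets ha hb hab)))
    (toInvolutionCosets ha hb hab).isIntertwining'

end KleinFour

theorem commute_of_mul_self {G : Type*} [Group G] {a b : G} (ha : a * a = 1) (hb : b * b = 1)
    (hab : a * b * (a * b) = 1) : Commute a b :=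
  calc a * b = (a * b)⁻¹ := eq_inv_of_mul_eq_one_left hab
    _ = b * a := by rw [mul_inv_rev, ← eq_inv_of_mul_eq_one_left ha, ← eq_inv_of_mul_eq_one_left hb]

theorem mul_self_eq_one_of_isConj {G : Type*} [Group G] {x y : G} (h : IsConj x y)
    (hx : x * x = 1) : y * y = 1 := by
  obtain ⟨s, rfl⟩ := isConj_iff.mp h
  simp [hx]

theorem permRep_relation_A5_general {k G : Type*} [CommRing k] [Invertible (2 : k)] [Group G]
    {a b : G} (ha : a * a = 1) (hb : IsConj a b) (hab : IsConj a (a * b)) :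
    ∃ e : ((G ⧸ (⊥ : Subgroup G)) ⊕ (Σ _ : Fin 2, G ⧸ Subgroup.closure {a, b}) →₀ k) ≃ₗ[k]
        ((Σ _ : Fin 3, G ⧸ Subgroup.zpowers a) →₀ k),
      ∀ (g : G) v,
        e (ofMulAction k G ((G ⧸ (⊥ : Subgroup G)) ⊕ (Σ _ : Fin 2, G ⧸ Subgroup.closure {a, b})) g
            (MonoidAlgebra.ofCoeff v)).coeff =
          (ofMulAction k G (Σ _ : Fin 3, G ⧸ Subgroup.zpowers a) g
            (MonoidAlgebra.ofCoeff (e v))).coeff := by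
  have hb_sq : b * b = 1 := mul_self_eq_one_of_isConj hb ha
  have hcomm : Commute a b := commute_of_mul_self ha hb_sq (mul_self_eq_one_of_isConj hab ha)
  have hconj (i : Fin 3) : IsConj a (![a, b, a * b] i) := by
    fin_cases i
    exacts [IsConj.refl a, hb, hab]
  choose e he using fun i ↦ exists_quotient_zpowers_equiv_of_isConj (hconj i)
  exact exists_finsupp_linearEquiv <| (kleinFourPermRepEquiv ha hb_sq hcomm).trans <|
    permRepCongr k (Equiv.sigmaCongrRight e) fun g ⟨i, q⟩ ↦ by simp [Sigma.smul_mk, he]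

section A5

theorem a_mul_a : a * a = 1 := by
  ext1; decide

theorem a_mul_b : a * b = c := by
  ext1; decide

theorem V4_eq_closure : V4 = Subgroup.closure {a, b} := by
  have ha : a ∈ Subgroup.closure {a, b} := Subgroup.subset_closure (by simp)
  have hb : b ∈ Subgroup.closure {a, b} := Subgroup.subset_closure (by simp)
  refine le_antisymm ?_ ?_
  · rintro x (rfl | rfl | rfl | rfl)
    exacts [one_mem _, ha, hb, a_mul_b ▸ mul_mem ha hb]
  · rw [Subgroup.closure_le, Set.insert_subset_iff, Set.singleton_subset_iff]
    exact ⟨.inr (.inl rfl), .inr (.inr (.inl rfl))⟩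

/-- The 3-cycle `(1 2 3)`, which normalizes `V₄` and permutes its involutions cyclically. -/
def threeCycle : alternatingGroup (Fin 5) :=
  ⟨c[1, 2, 3], Equiv.Perm.mem_alternatingGroup.mpr (by decide)⟩

theorem isConj_a_b : IsConj a b :=
  isConj_iff.mpr ⟨threeCycle, by ext1; decide⟩

theorem isConj_a_c : IsConj a c :=
  isConj_iff.mpr ⟨threeCycle⁻¹, by ext1; decide⟩

end A5

/-- The relation `ℂ[G/1] ⊕ ℂ[G/V₄]^{⊕2} ≅ ℂ[G/C₂]^{⊕3}` of complex permutation
representations of `G = A₅`, where `C₂ = ⟨(0 1)(2 3)⟩` and `V₄` is the Klein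
four-subgroup. -/
theorem permRep_relation_A5 :
    ∃ e : (((alternatingGroup (Fin 5) ⧸ (⊥ : Subgroup (alternatingGroup (Fin 5)))) ⊕
            (Σ _ : Fin 2, alternatingGroup (Fin 5) ⧸ V4)) →₀ ℂ) ≃ₗ[ℂ]
          ((Σ _ : Fin 3, alternatingGroup (Fin 5) ⧸ C2) →₀ ℂ),
      ∀ (g : alternatingGroup (Fin 5)) (v),
        e (Representation.ofMulAction ℂ (alternatingGroup (Fin 5))
            ((alternatingGroup (Fin 5) ⧸ (⊥ : Subgroup (alternatingGroup (Fin 5)))) ⊕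
              (Σ _ : Fin 2, alternatingGroup (Fin 5) ⧸ V4)) g (MonoidAlgebra.ofCoeff v)).coeff =
          (Representation.ofMulAction ℂ (alternatingGroup (Fin 5))
            (Σ _ : Fin 3, alternatingGroup (Fin 5) ⧸ C2) g (MonoidAlgebra.ofCoeff (e v))).coeff := by
  have : Invertible (2 : ℂ) := invertibleOfNonzero two_ne_zero
  exact V4_eq_closure ▸ permRep_relation_A5_general a_mul_a isConj_a_b (a_mul_b ▸ isConj_a_c)

end Stmt13
end
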